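/- arXiv:2306.02638 — 8 statements merged into one kernel-verified Lean document; each statement's English description precedes it below -/
import Mathlib

section
/- Let Z be a Banach space over 𝕂 (𝕂 = ℝ or ℂ) and let u ∈ Z with ‖u‖ = 1. Then for every z ∈ Z, V(Z,u,z) = conv{ φ(z) : φ is an extreme point of the closed unit ball of Z*, φ(u) = 1 }. -/
open Filter Topology Metric

/-- In a finite-dimensional space, every convex set has a nonzero supporting functional at any of
its points outside its interior. -/
theorem Convex.exists_ne_zero_forall_le_of_notMem_interior {E : Type*} [NormedAddCommGroup E]
    [NormedSpace ℝ E] [FiniteDimensional ℝ E] {K : Set E} (hK : Convex ℝ K) {x : E} (hx : x ∈ K)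
    (hxK : x ∉ interior K) : ∃ f : StrongDual ℝ E, f ≠ 0 ∧ ∀ y ∈ K, f y ≤ f x := by
  by_cases hint : (interior K).Nonempty
  · exact geometric_hahn_banach_of_nonempty_interior_point hK hxK hint
  · rw [hK.interior_nonempty_iff_affineSpan_eq_top,
      AffineSubspace.affineSpan_eq_top_iff_vectorSpan_eq_top_of_nonempty ℝ E E ⟨x, hx⟩] at hint
    obtain ⟨f, hf, hker⟩ := Submodule.exists_le_ker_of_lt_top _ (lt_top_iff_ne_top.2 hint)
    refine ⟨f.toContinuousLinearMap, ?_, fun y hy => ?_⟩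
    · simpa using hf
    · have h : f (y - x) = 0 := hker (vsub_mem_vectorSpan ℝ hy hx)
      rw [map_sub, sub_eq_zero] at h
      exact h.le

/-- The extreme points of the slice of `K` through `x` by the kernel of a functional supporting
`K` at `x` are extreme points of `K`. -/
theorem add_mem_extremePoints_of_supporting {E : Type*} [NormedAddCommGroup E]
    [NormedSpace ℝ E] {K : Set E} {x : E} {f : StrongDual ℝ E} (hf : ∀ y ∈ K, f y ≤ f x)
    {w : f.ker} (hw : w ∈ Set.extremePoints ℝ {w : f.ker | x + (w : E) ∈ K}) :
    x + (w : E) ∈ Set.extremePoints ℝ K := by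
  have hfw : f w = 0 := w.2
  refine ⟨hw.1, fun y hy y' hy' hseg => ?_⟩
  obtain ⟨a, b, ha, hb, hab, heq⟩ := hseg
  have hval : a * f y + b * f y' = f x := by simpa [hfw] using congrArg f heq
  have hy_le := hf y hy
  have hy'_le := hf y' hy'
  have hb_eq : b = 1 - a := by linarith
  have hfy : f y = f x := by
    subst hb_eq
    nlinarith
  have hfy' : f y' = f x := by
    subst hb_eq
    nlinarith
  have hmem : y - x ∈ f.ker := by simp [hfy]
  have hmem' : y' - x ∈ f.ker := by simp [hfy']
  have key : (⟨y - x, hmem⟩ : f.ker) = w := by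
    refine hw.2 (x₁ := ⟨y - x, hmem⟩) (by simpa using hy) (x₂ := ⟨y' - x, hmem'⟩)
      (by simpa using hy') ⟨a, b, ha, hb, hab, Subtype.ext ?_⟩
    have hx : a • x + b • x = x := by rw [← add_smul, hab, one_smul]
    simp only [Submodule.coe_add, Submodule.coe_smul, smul_sub]
    calc a • y - a • x + (b • y' - b • x) = (a • y + b • y') - (a • x + b • x) := by abel
      _ = w := by rw [heq, hx]; abel
  rw [← key]
  simp

/-- A compact set meets every ray issued from one of its points in a farthest point. -/
theorem IsCompact.exists_max_smul_mem {E : Type*} [NormedAddCommGroup E]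
    [NormedSpace ℝ E] {K : Set E} (hK : IsCompact K) {e v : E} (hv : v ≠ 0) (hev : e + v ∈ K) :
    ∃ t : ℝ, 1 ≤ t ∧ e + t • v ∈ K ∧ ∀ s : ℝ, e + s • v ∈ K → s ≤ t := by
  have hemb : IsClosedEmbedding fun t : ℝ => e + t • v :=
    (Homeomorph.addLeft e).isClosedEmbedding.comp (isClosedEmbedding_smul_left hv)
  obtain ⟨t, ht, hmax⟩ := (hemb.isCompact_preimage hK).exists_isMaxOn
    ⟨1, by simpa using hev⟩ continuousOn_id
  exact ⟨t, hmax (by simpa using hev), ht, fun s hs => hmax hs⟩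

/-- **Minkowski's theorem**: a compact convex set in a finite-dimensional space is the convex hull
of its extreme points. -/
theorem IsCompact.convexHull_extremePoints_eq {E : Type*} [NormedAddCommGroup E]
    [NormedSpace ℝ E] [FiniteDimensional ℝ E] {K : Set E} (hK : IsCompact K)
    (hconv : Convex ℝ K) : convexHull ℝ (Set.extremePoints ℝ K) = K := by
  refine (convexHull_min extremePoints_subset hconv).antisymm fun x hx => ?_
  induction hn : Module.finrank ℝ E using Nat.strong_induction_on generalizing E with
  | _ n ih =>
  obtain ⟨e, he⟩ := hK.extremePoints_nonempty ⟨x, hx⟩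
  obtain rfl | hxe := eq_or_ne x e
  · exact subset_convexHull ℝ _ he
  obtain ⟨t, ht, hbK, hmax⟩ :=
    hK.exists_max_smul_mem (e := e) (sub_ne_zero.2 hxe) (by simpa using hx)
  set b := e + t • (x - e) with hb
  have hbint : b ∉ interior K := fun hbi => by
    have hlim : Tendsto (fun s : ℝ => e + s • (x - e)) (𝓝[>] t) (𝓝 b) :=
      ((by fun_prop : Continuous fun s : ℝ => e + s • (x - e)).tendsto t).mono_left
        nhdsWithin_le_nhds
    obtain ⟨s, hs, hst⟩ :=
      ((hlim.eventually (mem_interior_iff_mem_nhds.1 hbi)).and self_mem_nhdsWithin).exists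
    exact (hmax s hs).not_gt hst
  have hbmem : b ∈ convexHull ℝ (Set.extremePoints ℝ K) := by
    obtain ⟨f, hf, hle⟩ := hconv.exists_ne_zero_forall_le_of_notMem_interior hbK hbint
    let g : f.ker →ᵃ[ℝ] E := AffineMap.const ℝ f.ker b + f.ker.subtype.toAffineMap
    have hg : ∀ w, g w = b + (w : E) := fun w => by simp [g]
    have hg0 : IsClosedEmbedding fun w : f.ker => b + (w : E) :=
      (Homeomorph.addLeft b).isClosedEmbedding.comp f.isClosed_ker.isClosedEmbedding_subtypeVal
    have hlt : Module.finrank ℝ f.ker < n := by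
      rw [← hn]
      refine Submodule.finrank_lt fun h => hf ?_
      ext y
      have hy : y ∈ f.ker := h ▸ Submodule.mem_top
      simpa using hy
    have hslice : Convex ℝ {w : f.ker | b + (w : E) ∈ K} := by
      have := hconv.affine_preimage g
      simpa [Set.preimage, hg] using this
    have h0 := ih _ hlt (hg0.isCompact_preimage hK) hslice (x := 0)
      (by simpa using hbK) rfl
    have himg := Set.mem_image_of_mem g h0
    rw [AffineMap.image_convexHull, hg] at himg
    simp only [ZeroMemClass.coe_zero, add_zero] at himg
    refine convexHull_mono ?_ himg
    rintro _ ⟨w, hw, rfl⟩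
    rw [hg]
    exact add_mem_extremePoints_of_supporting hle hw
  have ht0 : 0 < t := by linarith
  refine (convex_convexHull ℝ _).segment_subset (subset_convexHull ℝ _ he) hbmem
    ⟨1 - t⁻¹, t⁻¹, sub_nonneg.2 (inv_le_one_of_one_le₀ ht), by positivity, by ring, ?_⟩
  rw [hb, smul_add, inv_smul_smul₀ ht0.ne', sub_smul, one_smul]
  abel

/-- The state space at a unit vector `u` is an extreme subset of the dual unit ball. -/
theorem isExtreme_closedBall_sep_apply_eq_one {𝕜 : Type*} [RCLike 𝕜] {Z : Type*}
    [NormedAddCommGroup Z] [NormedSpace 𝕜 Z] {u : Z} (hu : ‖u‖ = 1) :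
    IsExtreme ℝ (closedBall (0 : Z →L[𝕜] 𝕜) 1) {φ ∈ closedBall (0 : Z →L[𝕜] 𝕜) 1 | φ u = 1} := by
  have hball : ∀ φ ∈ closedBall (0 : Z →L[𝕜] 𝕜) 1, φ u ∈ closedBall (0 : 𝕜) 1 := fun φ hφ => by
    simpa [hu] using φ.le_of_opNorm_le (mem_closedBall_zero_iff.1 hφ) u
  have hone : (1 : 𝕜) ∈ Set.extremePoints ℝ (closedBall (0 : 𝕜) 1) :=
    StrictConvexSpace.sphere_subset_extremePoints_closedBall 0 one_ne_zero (by simp)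
  refine ⟨fun φ hφ => hφ.1, fun φ hφ ψ hψ χ hχ hseg => ⟨hφ, ?_⟩⟩
  obtain ⟨a, b, ha, hb, hab, rfl⟩ := hseg
  exact hone.2 (hball φ hφ) (hball ψ hψ) ⟨a, b, ha, hb, hab, by simpa using hχ.2⟩

/-- The abstract numerical range `V(Z,u,z)` equals the convex hull of the values `φ z`
where `φ` runs over the extreme points of the dual unit ball with `φ u = 1`. -/
theorem numerical_range_eq_convexHull_extremePoints {𝕜 : Type*} [RCLike 𝕜] {Z : Type*}
    [NormedAddCommGroup Z] [NormedSpace 𝕜 Z] [CompleteSpace Z]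
    (u : Z) (hu : ‖u‖ = 1) (z : Z) :
    {α : 𝕜 | ∃ φ : Z →L[𝕜] 𝕜, ‖φ‖ = 1 ∧ φ u = 1 ∧ φ z = α} =
      convexHull ℝ {α : 𝕜 | ∃ φ ∈ Set.extremePoints ℝ (Metric.closedBall (0 : Z →L[𝕜] 𝕜) 1),
        φ u = 1 ∧ φ z = α} := by
  have : LocallyConvexSpace ℝ (WeakDual 𝕜 Z) :=
    (WeakDual.withSeminorms 𝕜 Z).toLocallyConvexSpace
  let S : Set (Z →L[𝕜] 𝕜) := {φ ∈ closedBall (0 : Z →L[𝕜] 𝕜) 1 | φ u = 1}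
  let e : WeakDual 𝕜 Z ≃ₗ[ℝ] (Z →L[𝕜] 𝕜) := WeakDual.toStrongDual.restrictScalars ℝ
  let ev : WeakDual 𝕜 Z →L[ℝ] 𝕜 :=
    { toFun := fun φ => φ z
      map_add' := fun _ _ => rfl
      map_smul' := fun _ _ => rfl
      cont := WeakDual.eval_continuous z }
  have hS : IsCompact (e ⁻¹' S) :=
    (WeakDual.isCompact_closedBall (0 : StrongDual 𝕜 Z) 1).inter_right
      (isClosed_singleton.preimage (WeakDual.eval_continuous u))
  have hSconv : Convex ℝ S := by
    refine (convex_closedBall _ _).inter fun φ hφ ψ hψ a b _ _ hab => ?_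
    change φ u = 1 at hφ
    change ψ u = 1 at hψ
    change (a • φ + b • ψ) u = 1
    simp [hφ, hψ, ← add_smul, hab]
  have hV : {α : 𝕜 | ∃ φ : Z →L[𝕜] 𝕜, ‖φ‖ = 1 ∧ φ u = 1 ∧ φ z = α} = ev '' (e ⁻¹' S) := by
    ext α
    constructor
    · rintro ⟨φ, hφ, hφu, rfl⟩
      exact ⟨e.symm φ, ⟨by simp [hφ], hφu⟩, rfl⟩
    · rintro ⟨φ, ⟨hφ, hφu⟩, rfl⟩
      refine ⟨e φ, (mem_closedBall_zero_iff.1 hφ).antisymm ?_, hφu, rfl⟩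
      simpa [hφu, hu] using (e φ).le_opNorm u
  have hVconv : Convex ℝ (ev '' (e ⁻¹' S)) :=
    (hSconv.linear_preimage e.toLinearMap).linear_image ev.toLinearMap
  rw [hV]
  apply Set.Subset.antisymm
  · rw [← (hS.image ev.continuous).convexHull_extremePoints_eq hVconv]
    refine convexHull_mono fun α hα => ?_
    obtain ⟨φ, hφ, rfl⟩ := surjOn_extremePoints_image ev.toContinuousAffineMap hS hα
    have hφS : e φ ∈ Set.extremePoints ℝ S := by
      rw [← Set.image_preimage_eq S e.surjective, ← image_extremePoints e]
      exact Set.mem_image_of_mem e hφ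
    exact ⟨e φ, (isExtreme_closedBall_sep_apply_eq_one hu).extremePoints_subset_extremePoints hφS,
      hφS.1.2, rfl⟩
  · refine convexHull_min ?_ hVconv
    rintro _ ⟨φ, hφ, hφu, rfl⟩
    exact ⟨e.symm φ, ⟨hφ.1, hφu⟩, rfl⟩
end

section
/- Let Z be a Banach space over 𝕂 (𝕂 = ℝ or ℂ), let u ∈ Z with ‖u‖ = 1, and let Λ be a subset of the closed unit ball of Z* that is one-norming for Z. Then for every z ∈ Z, V(Z,u,z) = conv{ λ ∈ 𝕂 : there exists a sequence (ψ_n) in Λ with |ψ_n(u)| → 1 and ψ_n(z)·conj(ψ_n(u)) → λ }. -/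
open Filter Topology Metric

/-- In a finite-dimensional space the convex hull of a compact set is compact. -/
lemma isCompact_convexHull {E : Type*} [NormedAddCommGroup E] [NormedSpace ℝ E]
    [FiniteDimensional ℝ E] {s : Set E} (hs : IsCompact s) : IsCompact (convexHull ℝ s) := by
  let comb (k : ℕ) : (Fin k → ℝ) × (Fin k → E) → E := fun p => ∑ i, p.1 i • p.2 i
  have h : convexHull ℝ s = ⋃ k ∈ Set.Iic (Module.finrank ℝ E + 1),
      comb k '' (stdSimplex ℝ (Fin k) ×ˢ Set.univ.pi fun _ => s) := by
    ext x
    simp only [Set.mem_iUnion, Set.mem_Iic, exists_prop]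
    constructor
    · intro hx
      obtain ⟨ι, _, y, w, hy, hind, hw, hw1, rfl⟩ := eq_pos_convex_span_of_mem_convexHull hx
      let e := Fintype.equivFin ι
      have hcard : Fintype.card ι ≤ Module.finrank ℝ E + 1 :=
        hind.card_le_finrank_succ.trans (Nat.succ_le_succ (Submodule.finrank_le _))
      refine ⟨Fintype.card ι, hcard, (w ∘ e.symm, y ∘ e.symm),
        ⟨⟨fun i => (hw _).le, ?_⟩, fun i _ => hy ⟨_, rfl⟩⟩, ?_⟩
      · exact (e.symm.sum_comp w).trans hw1
      · exact e.symm.sum_comp fun i => w i • y i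
    · rintro ⟨k, -, ⟨w, y⟩, ⟨hw, hy⟩, rfl⟩
      exact (convex_convexHull ℝ s).sum_mem (fun i _ => hw.1 i) hw.2
        fun i _ => subset_convexHull ℝ s (hy i trivial)
  rw [h]
  refine (Set.finite_Iic _).isCompact_biUnion fun k _ => ?_
  exact ((isCompact_stdSimplex ℝ _).prod (isCompact_univ_pi fun _ => hs)).image (by fun_prop)

section NumericalRange

variable {𝕜 : Type*} [RCLike 𝕜] {Z : Type*} [NormedAddCommGroup Z] [NormedSpace 𝕜 Z]

/-- A functional of norm at most one that takes the value one at a unit vector has norm one. -/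
lemma norm_eq_one_of_norm_le_one_of_apply_eq_one {u : Z} (hu : ‖u‖ = 1) {φ : Z →L[𝕜] 𝕜}
    (hφ : ‖φ‖ ≤ 1) (hφu : φ u = 1) : ‖φ‖ = 1 := by
  refine le_antisymm hφ ?_
  simpa [hφu, hu] using φ.le_opNorm u

lemma convex_numericalRange {u : Z} (hu : ‖u‖ = 1) (z : Z) :
    Convex ℝ {α : 𝕜 | ∃ φ : Z →L[𝕜] 𝕜, ‖φ‖ = 1 ∧ φ u = 1 ∧ φ z = α} := by
  rintro _ ⟨φ, hφ, hφu, rfl⟩ _ ⟨ψ, hψ, hψu, rfl⟩ a b ha hb hab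
  have hu' : ((a : 𝕜) • φ + (b : 𝕜) • ψ) u = 1 := by
    simp only [add_apply, FunLike.coe_smul, Pi.smul_apply, hφu, hψu, smul_eq_mul, mul_one]
    exact_mod_cast hab
  refine ⟨(a : 𝕜) • φ + (b : 𝕜) • ψ, norm_eq_one_of_norm_le_one_of_apply_eq_one hu ?_ hu', hu', ?_⟩
  · calc ‖(a : 𝕜) • φ + (b : 𝕜) • ψ‖ ≤ ‖(a : 𝕜) • φ‖ + ‖(b : 𝕜) • ψ‖ := norm_add_le _ _
      _ = 1 := by
        simp [norm_smul, hφ, hψ, abs_of_nonneg ha, abs_of_nonneg hb, hab]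
  · simp [RCLike.real_smul_eq_coe_mul]

/-- By the Banach–Alaoglu theorem, if functionals in the dual unit ball have values at `u` and `z`
converging to `β` and `α`, then some functional in the ball takes these limits as values. -/
lemma exists_functional_of_tendsto {u z : Z} {α β : 𝕜} {φ : ℕ → Z →L[𝕜] 𝕜}
    (hφ : ∀ n, ‖φ n‖ ≤ 1) (hφu : Tendsto (fun n => φ n u) atTop (𝓝 β))
    (hφz : Tendsto (fun n => φ n z) atTop (𝓝 α)) :
    ∃ ψ : Z →L[𝕜] 𝕜, ‖ψ‖ ≤ 1 ∧ ψ u = β ∧ ψ z = α := by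
  obtain ⟨ψ, hψ, hc⟩ := (WeakDual.isCompact_closedBall (𝕜 := 𝕜) (E := Z) 0 1).exists_mapClusterPt
    (f := atTop) (u := fun n => StrongDual.toWeakDual (φ n)) (by
      refine tendsto_principal.2 (Eventually.of_forall fun n => ?_)
      simpa using hφ n)
  have apply_eq (x : Z) {γ : 𝕜} (h : Tendsto (fun n => φ n x) atTop (𝓝 γ)) : ψ x = γ := by
    have h' : MapClusterPt (ψ x) atTop (fun n => φ n x) :=
      hc.continuousAt_comp (WeakDual.eval_continuous x).continuousAt
    exact eq_of_nhds_neBot (h'.clusterPt.mono h)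
  exact ⟨WeakDual.toStrongDual ψ, by simpa using hψ, apply_eq u hφu, apply_eq z hφz⟩

/-- The set of limits `lim ψ_n z * conj (ψ_n u)` over sequences in `Λ` with `|ψ_n u| → 1`. -/
def limitRange (Λ : Set (Z →L[𝕜] 𝕜)) (u z : Z) : Set 𝕜 :=
  {α : 𝕜 | ∃ ψ : ℕ → Z →L[𝕜] 𝕜, (∀ n, ψ n ∈ Λ) ∧
    Tendsto (fun n => ‖ψ n u‖) atTop (𝓝 1) ∧
    Tendsto (fun n => ψ n z * (starRingEnd 𝕜) (ψ n u)) atTop (𝓝 α)}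

lemma isClosed_limitRange (Λ : Set (Z →L[𝕜] 𝕜)) (u z : Z) : IsClosed (limitRange Λ u z) := by
  let g : (Z →L[𝕜] 𝕜) → ℝ × 𝕜 := fun ψ => (‖ψ u‖, ψ z * (starRingEnd 𝕜) (ψ u))
  have h : limitRange Λ u z = (fun α : 𝕜 => ((1 : ℝ), α)) ⁻¹' closure (g '' Λ) := by
    ext α
    rw [Set.mem_preimage, mem_closure_iff_seq_limit]
    constructor
    · rintro ⟨ψ, hψ, h1, h2⟩
      exact ⟨fun n => g (ψ n), fun n => ⟨ψ n, hψ n, rfl⟩, h1.prodMk_nhds h2⟩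
    · rintro ⟨x, hx, hlim⟩
      choose ψ hψ hg using hx
      obtain rfl : (fun n => g (ψ n)) = x := funext hg
      exact ⟨ψ, hψ, (continuous_fst.tendsto _).comp hlim, (continuous_snd.tendsto _).comp hlim⟩
  rw [h]
  exact isClosed_closure.preimage (by fun_prop)

lemma norm_apply_mul_conj_le {ψ : Z →L[𝕜] 𝕜} (hψ : ‖ψ‖ ≤ 1) {u : Z} (hu : ‖u‖ = 1) (z : Z) :
    ‖ψ z * (starRingEnd 𝕜) (ψ u)‖ ≤ ‖z‖ := by
  have h1 : ‖ψ z‖ ≤ ‖z‖ := ψ.le_of_opNorm_le_of_le hψ le_rfl |>.trans_eq (one_mul _)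
  have h2 : ‖ψ u‖ ≤ 1 := ψ.le_of_opNorm_le_of_le hψ hu.le |>.trans_eq (one_mul _)
  rw [norm_mul, RCLike.norm_conj]
  exact (mul_le_of_le_one_right (norm_nonneg _) h2).trans h1

lemma isCompact_limitRange {Λ : Set (Z →L[𝕜] 𝕜)} (hΛ : ∀ ψ ∈ Λ, ‖ψ‖ ≤ 1) {u : Z}
    (hu : ‖u‖ = 1) (z : Z) : IsCompact (limitRange Λ u z) := by
  refine (isCompact_closedBall (0 : 𝕜) ‖z‖).of_isClosed_subset (isClosed_limitRange Λ u z) ?_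
  rintro α ⟨ψ, hψ, -, h⟩
  refine isClosed_closedBall.mem_of_tendsto h (Eventually.of_forall fun n => ?_)
  simpa using norm_apply_mul_conj_le (hΛ _ (hψ n)) hu z

lemma limitRange_subset_numericalRange {Λ : Set (Z →L[𝕜] 𝕜)} (hΛ : ∀ ψ ∈ Λ, ‖ψ‖ ≤ 1) {u : Z}
    (hu : ‖u‖ = 1) (z : Z) :
    limitRange Λ u z ⊆ {α : 𝕜 | ∃ φ : Z →L[𝕜] 𝕜, ‖φ‖ = 1 ∧ φ u = 1 ∧ φ z = α} := by
  rintro α ⟨ψ, hψ, h1, hα⟩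
  have hnorm (n) : ‖(starRingEnd 𝕜) (ψ n u) • ψ n‖ ≤ 1 := by
    have h2 : ‖ψ n u‖ ≤ 1 :=
      (ψ n).le_of_opNorm_le_of_le (hΛ _ (hψ n)) hu.le |>.trans_eq (one_mul _)
    rw [norm_smul, RCLike.norm_conj]
    exact mul_le_one₀ h2 (norm_nonneg _) (hΛ _ (hψ n))
  have hlimu : Tendsto (fun n => ((starRingEnd 𝕜) (ψ n u) • ψ n) u) atTop (𝓝 1) := by
    have h : Tendsto (fun n => ((‖ψ n u‖ : ℝ) : 𝕜) ^ 2) atTop (𝓝 (((1 : ℝ) : 𝕜) ^ 2)) :=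
      ((RCLike.continuous_ofReal.tendsto _).comp h1).pow 2
    simpa [RCLike.conj_mul] using h
  have hlimz : Tendsto (fun n => ((starRingEnd 𝕜) (ψ n u) • ψ n) z) atTop (𝓝 α) := by
    simpa [mul_comm] using hα
  obtain ⟨φ, hφ, hφu, hφz⟩ := exists_functional_of_tendsto hnorm hlimu hlimz
  exact ⟨φ, norm_eq_one_of_norm_le_one_of_apply_eq_one hu hφ hφu, hφu, hφz⟩

/-- Expansion of `|ψ (u + t z)|²`, bounded above for `ψ` in the dual unit ball. -/
lemma norm_apply_add_smul_sq_le {ψ : Z →L[𝕜] 𝕜} (hψ : ‖ψ‖ ≤ 1) {u : Z} (hu : ‖u‖ = 1) (z : Z)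
    (t : ℝ) : ‖ψ (u + (t : 𝕜) • z)‖ ^ 2 ≤
      1 + 2 * t * RCLike.re (ψ z * (starRingEnd 𝕜) (ψ u)) + t ^ 2 * ‖z‖ ^ 2 := by
  have h1 : ‖ψ z‖ ≤ ‖z‖ := ψ.le_of_opNorm_le_of_le hψ le_rfl |>.trans_eq (one_mul _)
  have h2 : ‖ψ u‖ ≤ 1 := ψ.le_of_opNorm_le_of_le hψ hu.le |>.trans_eq (one_mul _)
  have h3 : ‖ψ (u + (t : 𝕜) • z)‖ ^ 2 =
      ‖ψ u‖ ^ 2 + 2 * t * RCLike.re (ψ z * (starRingEnd 𝕜) (ψ u)) + t ^ 2 * ‖ψ z‖ ^ 2 := by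
    simp only [map_add, map_smul, smul_eq_mul, ← RCLike.normSq_eq_def', RCLike.normSq_apply,
      RCLike.mul_re, RCLike.mul_im, RCLike.conj_re, RCLike.conj_im, RCLike.ofReal_re,
      RCLike.ofReal_im]
    ring
  rw [h3]
  gcongr
  exact pow_le_one₀ (norm_nonneg _) h2

/-- A one-norming set almost attains norms. -/
lemma exists_mem_lt_norm_apply {Λ : Set (Z →L[𝕜] 𝕜)}
    (hΛ : ∀ w : Z, ‖w‖ = sSup ((fun φ : Z →L[𝕜] 𝕜 => ‖φ w‖) '' Λ)) {u : Z} (hu : ‖u‖ = 1)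
    (w : Z) {ε : ℝ} (hε : 0 < ε) : ∃ ψ ∈ Λ, ‖w‖ - ε < ‖ψ w‖ := by
  have hne : Λ.Nonempty := by
    by_contra h
    have := hΛ u
    simp [Set.not_nonempty_iff_eq_empty.1 h, hu] at this
  obtain ⟨_, ⟨ψ, hψ, rfl⟩, h⟩ := exists_lt_of_lt_csSup
    (hne.image (fun φ : Z →L[𝕜] 𝕜 => ‖φ w‖)) ((sub_lt_self _ hε).trans_eq (hΛ w))
  exact ⟨ψ, hψ, h⟩

/-- Every real functional `re (c * ·)` is at least as large somewhere on the limit set as at a given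
point of the numerical range. -/
lemma exists_mem_limitRange_re_le {Λ : Set (Z →L[𝕜] 𝕜)} (hΛ1 : ∀ ψ ∈ Λ, ‖ψ‖ ≤ 1)
    (hΛ : ∀ w : Z, ‖w‖ = sSup ((fun φ : Z →L[𝕜] 𝕜 => ‖φ w‖) '' Λ)) {u : Z} (hu : ‖u‖ = 1)
    (z : Z) {φ : Z →L[𝕜] 𝕜} (hφ : ‖φ‖ = 1) (hφu : φ u = 1) (c : 𝕜) :
    ∃ β ∈ limitRange Λ u z, RCLike.re (c * φ z) ≤ RCLike.re (c * β) := by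
  let t : ℕ → ℝ := fun n => 1 / ((n : ℝ) + 1)
  have ht (n) : 0 < t n := by positivity
  have ht0 : Tendsto t atTop (𝓝 0) := tendsto_one_div_add_atTop_nhds_zero_nat
  choose ψ hψ hlt using fun n => exists_mem_lt_norm_apply hΛ hu
    (u + ((t n : ℝ) : 𝕜) • (c • z)) (pow_pos (ht n) 2)
  set r := RCLike.re (c * φ z) with hr
  have hlow (n) : 1 + t n * r ≤ ‖u + ((t n : ℝ) : 𝕜) • (c • z)‖ := by
    have h : ‖φ (u + ((t n : ℝ) : 𝕜) • (c • z))‖ ≤ _ := φ.le_opNorm _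
    rw [hφ, one_mul] at h
    refine le_trans ?_ ((RCLike.re_le_norm _).trans h)
    simp [hφu, hr]
  have hψu1 (n) : ‖ψ n u‖ ≤ 1 :=
    (ψ n).le_of_opNorm_le_of_le (hΛ1 _ (hψ n)) hu.le |>.trans_eq (one_mul _)
  have hψu : Tendsto (fun n => ‖ψ n u‖) atTop (𝓝 1) := by
    have hlim : Tendsto (fun n => 1 + t n * r - t n ^ 2 - t n * ‖c • z‖) atTop (𝓝 1) := by
      simpa using (((ht0.mul_const r).const_add 1).sub (ht0.pow 2)).sub (ht0.mul_const ‖c • z‖)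
    refine tendsto_of_tendsto_of_tendsto_of_le_of_le hlim tendsto_const_nhds (fun n => ?_) hψu1
    have h1 : ‖ψ n (c • z)‖ ≤ ‖c • z‖ :=
      (ψ n).le_of_opNorm_le_of_le (hΛ1 _ (hψ n)) le_rfl |>.trans_eq (one_mul _)
    have h2 : ‖ψ n (u + ((t n : ℝ) : 𝕜) • (c • z))‖ ≤ ‖ψ n u‖ + t n * ‖ψ n (c • z)‖ := by
      rw [map_add, map_smul]
      refine (norm_add_le _ _).trans_eq ?_
      rw [norm_smul, RCLike.norm_ofReal, abs_of_pos (ht n)]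
    have h3 := mul_le_mul_of_nonneg_left h1 (ht n).le
    have h4 := hlt n
    have h5 := hlow n
    dsimp only
    linarith
  obtain ⟨β, -, k, hk, hβ⟩ := (isCompact_closedBall (0 : 𝕜) ‖z‖).tendsto_subseq
    (x := fun n => ψ n z * (starRingEnd 𝕜) (ψ n u))
    (fun n => by simpa using norm_apply_mul_conj_le (hΛ1 _ (hψ n)) hu z)
  refine ⟨β, ⟨fun n => ψ (k n), fun n => hψ _, hψu.comp hk.tendsto_atTop, hβ⟩, ?_⟩
  have hbase : ∀ᶠ n in atTop, 0 < 1 + t n * r - t n ^ 2 := by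
    have hlim : Tendsto (fun n => 1 + t n * r - t n ^ 2) atTop (𝓝 1) := by
      simpa using ((ht0.mul_const r).const_add 1).sub (ht0.pow 2)
    exact hlim.eventually_const_lt one_pos
  have hineq : ∀ᶠ n in atTop, r - t n - t n * ‖c • z‖ ^ 2 / 2 ≤
      RCLike.re (c * (ψ n z * (starRingEnd 𝕜) (ψ n u))) := by
    filter_upwards [hbase] with n hn
    have h1 := norm_apply_add_smul_sq_le (hΛ1 _ (hψ n)) hu (c • z) (t n)
    have h2 : 1 + t n * r - t n ^ 2 ≤ ‖ψ n (u + ((t n : ℝ) : 𝕜) • (c • z))‖ := by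
      linarith [hlt n, hlow n]
    have h3 := pow_le_pow_left₀ hn.le h2 2
    rw [map_smul, smul_eq_mul, mul_assoc c] at h1
    refine le_of_mul_le_mul_left ?_ (mul_pos two_pos (ht n))
    nlinarith [sq_nonneg (t n * r - t n ^ 2)]
  have hleft : Tendsto (fun n => r - t n - t n * ‖c • z‖ ^ 2 / 2) atTop (𝓝 r) := by
    simpa using (ht0.const_sub r).sub ((ht0.mul_const (‖c • z‖ ^ 2)).div_const 2)
  exact le_of_tendsto_of_tendsto (hleft.comp hk.tendsto_atTop)
    ((RCLike.continuous_re.tendsto _).comp (hβ.const_mul c)) (hk.tendsto_atTop.eventually hineq)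

end NumericalRange

/-- If `Λ ⊆ B_{Z*}` is one-norming for `Z`, then the abstract numerical range `V(Z,u,z)`
equals the convex hull of the limits `lim ψ_n z * conj (ψ_n u)` over sequences `(ψ_n)` in `Λ`
with `|ψ_n u| → 1`. -/
theorem numerical_range_eq_convexHull_one_norming {𝕜 : Type*} [RCLike 𝕜] {Z : Type*}
    [NormedAddCommGroup Z] [NormedSpace 𝕜 Z] [CompleteSpace Z]
    (u : Z) (hu : ‖u‖ = 1) (Λ : Set (Z →L[𝕜] 𝕜)) (hΛ1 : Λ ⊆ Metric.closedBall 0 1)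
    (hΛ : ∀ w : Z, ‖w‖ = sSup ((fun φ : Z →L[𝕜] 𝕜 => ‖φ w‖) '' Λ))
    (z : Z) :
    {α : 𝕜 | ∃ φ : Z →L[𝕜] 𝕜, ‖φ‖ = 1 ∧ φ u = 1 ∧ φ z = α} =
      convexHull ℝ {α : 𝕜 | ∃ ψ : ℕ → Z →L[𝕜] 𝕜, (∀ n, ψ n ∈ Λ) ∧
        Tendsto (fun n => ‖ψ n u‖) atTop (𝓝 1) ∧
        Tendsto (fun n => ψ n z * (starRingEnd 𝕜) (ψ n u)) atTop (𝓝 α)} := by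
  have hball : ∀ ψ ∈ Λ, ‖ψ‖ ≤ 1 := fun ψ hψ => by simpa using hΛ1 hψ
  change _ = convexHull ℝ (limitRange Λ u z)
  refine Set.Subset.antisymm ?_
    (convexHull_min (limitRange_subset_numericalRange hball hu z) (convex_numericalRange hu z))
  rintro _ ⟨φ, hφ, hφu, rfl⟩
  by_contra hnot
  have hclosed : IsClosed (convexHull ℝ (limitRange Λ u z)) :=
    (isCompact_convexHull (isCompact_limitRange hball hu z)).isClosed
  obtain ⟨f, s, hs, hsφ⟩ := RCLike.geometric_hahn_banach_closed_point (𝕜 := 𝕜)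
    (convex_convexHull ℝ _) hclosed hnot
  have hf (x : 𝕜) : f x = f 1 * x := by
    rw [mul_comm, ← smul_eq_mul, ← map_smul, smul_eq_mul, mul_one]
  obtain ⟨β, hβ, hle⟩ := exists_mem_limitRange_re_le hball hΛ hu z hφ hφu (f 1)
  have h := hs β (subset_convexHull ℝ _ hβ)
  rw [hf] at h hsφ
  linarith
end

section
/- Let Z be a Banach space over 𝕂 (𝕂 = ℝ or ℂ) and let u ∈ Z with ‖u‖ = 1 be a spear vector of Z. Then no smooth point z₀ of Z is Birkhoff-James orthogonal to u; that is, if z₀ is a smooth point of Z, then there exists λ ∈ 𝕂 with ‖z₀ + λu‖ < ‖z₀‖. -/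
open Filter Topology Metric

section SupportFunctionals

variable {𝕜 : Type*} [RCLike 𝕜] {E : Type*} [SeminormedAddCommGroup E] [NormedSpace 𝕜 E]

/-- An element `x` of nonzero norm that is Birkhoff-James orthogonal to `y` has a support functional
vanishing at `y`. -/
theorem exists_support_functional_apply_eq_zero {x y : E} (hx : ‖x‖ ≠ 0)
    (h : ∀ c : 𝕜, ‖x‖ ≤ ‖x + c • y‖) :
    ∃ φ : E →L[𝕜] 𝕜, ‖φ‖ = 1 ∧ φ x = (‖x‖ : 𝕜) ∧ φ y = 0 := by
  set S : Submodule 𝕜 E := Submodule.span 𝕜 {y}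
  have hnorm : ‖S.mkQL x‖ = ‖x‖ := by
    refine le_antisymm (Submodule.Quotient.norm_mk_le S x) ?_
    refine QuotientAddGroup.le_norm_iff.2 fun m hm => ?_
    have hm' : m - x ∈ S := (Submodule.Quotient.eq S).1 hm
    obtain ⟨c, hc⟩ := Submodule.mem_span_singleton.1 hm'
    simpa [hc] using h c
  obtain ⟨g, hg, hgx⟩ := exists_dual_vector'' 𝕜 (S.mkQL x)
  have hφx : (g ∘L S.mkQL) x = (‖x‖ : 𝕜) := by
    rw [ContinuousLinearMap.comp_apply, hgx, hnorm]
  refine ⟨g ∘L S.mkQL, le_antisymm ?_ ?_, hφx, ?_⟩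
  · refine ContinuousLinearMap.opNorm_le_bound _ zero_le_one fun z => ?_
    exact (g.le_of_opNorm_le hg _).trans (by gcongr; exact Submodule.Quotient.norm_mk_le S z)
  · have hle := (g ∘L S.mkQL).le_opNorm x
    rw [hφx, RCLike.norm_ofReal, abs_norm] at hle
    exact le_of_mul_le_mul_right (by rwa [one_mul]) (lt_of_le_of_ne (norm_nonneg x) hx.symm)
  · have hy : S.mkQL y = 0 :=
      (Submodule.Quotient.mk_eq_zero S).2 (Submodule.mem_span_singleton_self y)
    rw [ContinuousLinearMap.comp_apply, hy, map_zero]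

/-- If the triangle inequality is an equality for `x` and `y`, then they share a support
functional. -/
theorem exists_common_support_functional {x y : E} (hx : ‖x‖ ≠ 0)
    (h : ‖x + y‖ = ‖x‖ + ‖y‖) :
    ∃ φ : E →L[𝕜] 𝕜, ‖φ‖ = 1 ∧ φ x = (‖x‖ : 𝕜) ∧ φ y = (‖y‖ : 𝕜) := by
  have hxy : ‖x + y‖ ≠ 0 := by
    have := lt_of_le_of_ne (norm_nonneg x) hx.symm
    rw [h]
    positivity
  obtain ⟨φ, hφ, hval⟩ := exists_dual_vector 𝕜 (x + y) hxy
  have hle (z : E) : ‖φ z‖ ≤ ‖z‖ := by simpa [hφ] using φ.le_opNorm z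
  have hre : RCLike.re (φ x) + RCLike.re (φ y) = ‖x‖ + ‖y‖ := by
    rw [← map_add, ← map_add, hval, RCLike.ofReal_re, h]
  have of_le_re {z : E} (hz : ‖z‖ ≤ RCLike.re (φ z)) : φ z = (‖z‖ : 𝕜) := by
    rw [← RCLike.re_eq_self_of_le ((hle z).trans hz),
      le_antisymm ((RCLike.re_le_norm _).trans (hle z)) hz]
  have hx' := (RCLike.re_le_norm (φ x)).trans (hle x)
  have hy' := (RCLike.re_le_norm (φ y)).trans (hle y)
  exact ⟨φ, hφ, of_le_re (by linarith), of_le_re (by linarith)⟩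

end SupportFunctionals

/-- No smooth point of a Banach space can be Birkhoff-James orthogonal to a spear vector. -/
theorem smooth_point_not_BJ_orthogonal_to_spear {𝕜 : Type*} [RCLike 𝕜] {Z : Type*}
    [NormedAddCommGroup Z] [NormedSpace 𝕜 Z] [CompleteSpace Z]
    (u : Z) (hu : ‖u‖ = 1)
    (hspear : ∀ z : Z, ∃ θ : 𝕜, ‖θ‖ = 1 ∧ ‖u + θ • z‖ = 1 + ‖z‖)
    (z₀ : Z) (hz₀ : z₀ ≠ 0)
    (hsmooth : ∃! φ : Z →L[𝕜] 𝕜, ‖φ‖ = 1 ∧ φ z₀ = (‖z₀‖ : 𝕜)) :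
    ∃ lam : 𝕜, ‖z₀ + lam • u‖ < ‖z₀‖ := by
  by_contra! h
  obtain ⟨φ, hφ, hφz, hφu⟩ := exists_support_functional_apply_eq_zero (norm_ne_zero_iff.2 hz₀) h
  obtain ⟨θ, hθ, hadd⟩ := hspear z₀
  have hθz : ‖θ • z₀‖ = ‖z₀‖ := by rw [norm_smul, hθ, one_mul]
  obtain ⟨ψ, hψ, hψu, hψz⟩ := exists_common_support_functional (𝕜 := 𝕜) (x := u) (y := θ • z₀)
    (by simp [hu]) (by rw [hadd, hu, hθz])
  have heq : θ • ψ = φ := hsmooth.unique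
    ⟨by rw [norm_smul, hθ, hψ, one_mul], by rw [← hθz, ← hψz, map_smul]; rfl⟩ ⟨hφ, hφz⟩
  have hzero : θ * ψ u = 0 := by rw [← hφu, ← heq]; rfl
  rw [hψu, hu, RCLike.ofReal_one, mul_one] at hzero
  simp [hzero] at hθ
end

section
/- Let A be a nonempty compact subset of 𝕂 (𝕂 = ℝ or ℂ). Then 0 ∈ conv(A) if and only if for every μ ∈ 𝕋 there exists a_μ ∈ A with Re(μ·a_μ) ≥ 0. Moreover, if A is in addition connected, then 0 ∈ conv(A) if and only if for every μ ∈ 𝕋 there exists a_μ ∈ A with Re(μ·a_μ) = 0. -/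
open Filter Topology Metric

/-- In a finite-dimensional space, the convex hull of a compact set is compact. -/
theorem IsCompact.convexHull_of_finiteDimensional {E : Type*} [AddCommGroup E] [Module ℝ E]
    [TopologicalSpace E] [IsTopologicalAddGroup E] [ContinuousSMul ℝ E] [FiniteDimensional ℝ E]
    {s : Set E} (hs : IsCompact s) : IsCompact (convexHull ℝ s) := by
  have hunion : convexHull ℝ s = ⋃ k ∈ Set.Iic (Module.finrank ℝ E + 1),
      (fun p : (Fin k → ℝ) × (Fin k → E) => ∑ i, p.1 i • p.2 i) ''
        (stdSimplex ℝ (Fin k) ×ˢ Set.univ.pi fun _ => s) := by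
    refine Set.Subset.antisymm (fun x hx => ?_) ?_
    · obtain ⟨ι, _, z, w, hz, hind, hw, hw1, rfl⟩ := eq_pos_convex_span_of_mem_convexHull hx
      have hcard : Fintype.card ι ≤ Module.finrank ℝ E + 1 :=
        hind.card_le_finrank_succ.trans (Nat.add_le_add_right (Submodule.finrank_le _) 1)
      let e := (Fintype.equivFin ι).symm
      refine Set.mem_biUnion hcard ⟨(w ∘ e, z ∘ e), ⟨⟨fun i => (hw _).le, ?_⟩, ?_⟩, ?_⟩
      · exact (e.sum_comp w).trans hw1
      · exact fun i _ => hz ⟨e i, rfl⟩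
      · exact e.sum_comp fun i => w i • z i
    · refine Set.iUnion₂_subset fun k _ => ?_
      rintro _ ⟨⟨w, z⟩, ⟨⟨hw, hw1⟩, hz⟩, rfl⟩
      exact (convex_convexHull ℝ s).sum_mem (fun i _ => hw i) hw1
        fun i _ => subset_convexHull ℝ s (hz i trivial)
  rw [hunion]
  refine (Set.finite_Iic _).isCompact_biUnion fun k _ => ?_
  exact ((isCompact_stdSimplex ℝ (Fin k)).prod (isCompact_univ_pi fun _ => hs)).image (by fun_prop)

/-- A compact set `A` has `0` in its convex hull iff no open half-plane bounded by a line through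
`0` contains `A`. -/
theorem zero_mem_convexHull_iff_exists_re_nonneg {𝕜 : Type*} [RCLike 𝕜]
    {A : Set 𝕜} (hne : A.Nonempty) (hA : IsCompact A) :
    (0 : 𝕜) ∈ convexHull ℝ A ↔ ∀ μ : 𝕜, ‖μ‖ = 1 → ∃ a ∈ A, 0 ≤ RCLike.re (μ * a) := by
  constructor
  · intro h μ _
    by_contra! hneg
    have hconv : Convex ℝ {x : 𝕜 | RCLike.re (μ * x) < 0} :=
      convex_halfSpace_lt (f := fun x : 𝕜 => RCLike.re (μ * x))
        ⟨fun x y => by simp [mul_add], fun c x => by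
          rw [mul_smul_comm, RCLike.smul_re, smul_eq_mul]⟩ 0
    have hlt : RCLike.re (μ * 0) < 0 := convexHull_min hneg hconv h
    simp at hlt
  · intro h
    by_contra h0
    obtain ⟨f, u, hfu, hu⟩ := RCLike.geometric_hahn_banach_closed_point (𝕜 := 𝕜)
      (convex_convexHull ℝ A) hA.convexHull_of_finiteDimensional.isClosed h0
    have hneg : ∀ a ∈ A, RCLike.re (f 1 * a) < 0 := fun a ha => by
      have hfa : f a = f 1 * a := by
        simpa [mul_comm] using f.map_smul a 1
      rw [← hfa]
      simpa using (hfu a (subset_convexHull ℝ A ha)).trans hu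
    have hf1 : f 1 ≠ 0 := by
      obtain ⟨a, ha⟩ := hne
      intro hf
      simpa [hf] using hneg a ha
    obtain ⟨a, ha, hpos⟩ := h (((‖f 1‖⁻¹ : ℝ) : 𝕜) * f 1) (by simp [hf1])
    rw [mul_assoc, RCLike.re_ofReal_mul] at hpos
    exact hpos.not_gt (mul_neg_of_pos_of_neg (by positivity) (hneg a ha))

/-- For a nonempty compact set `A ⊆ 𝕂`, `0 ∈ conv A` iff for every unimodular `μ` there is
`a ∈ A` with `Re (μ * a) ≥ 0`; if moreover `A` is connected, `0 ∈ conv A` iff for every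
unimodular `μ` there is `a ∈ A` with `Re (μ * a) = 0`. -/
theorem zero_mem_convexHull_iff {𝕜 : Type*} [RCLike 𝕜]
    (A : Set 𝕜) (hne : A.Nonempty) (hA : IsCompact A) :
    ((0 : 𝕜) ∈ convexHull ℝ A ↔ ∀ μ : 𝕜, ‖μ‖ = 1 → ∃ a ∈ A, 0 ≤ RCLike.re (μ * a)) ∧
    (IsConnected A →
      ((0 : 𝕜) ∈ convexHull ℝ A ↔ ∀ μ : 𝕜, ‖μ‖ = 1 → ∃ a ∈ A, RCLike.re (μ * a) = 0)) := by
  have hiff := zero_mem_convexHull_iff_exists_re_nonneg hne hA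
  refine ⟨hiff, fun hconn => hiff.trans ⟨fun h μ hμ => ?_, fun h μ hμ => ?_⟩⟩
  · obtain ⟨a, ha, ha0⟩ := h μ hμ
    obtain ⟨b, hb, hb0⟩ := h (-μ) (by rwa [norm_neg])
    have hcont : Continuous fun x : 𝕜 => RCLike.re (μ * x) :=
      RCLike.continuous_re.comp (continuous_const.mul continuous_id)
    exact hconn.isPreconnected.intermediate_value hb ha hcont.continuousOn
      ⟨by simpa only [neg_mul, map_neg, neg_nonneg] using hb0, ha0⟩
  · obtain ⟨a, ha, ha0⟩ := h μ hμ
    exact ⟨a, ha, ha0.ge⟩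
end

section
/- Let X, Y be Banach spaces over 𝕂 (𝕂 = ℝ or ℂ) and let T : X → Y be a nonzero bounded linear operator. Suppose there exists x₀ ∈ S_X such that: (1) T x₀ is a smooth point of Y; and (2) every sequence (x_n) in the closed unit ball of X with ‖T x_n‖ → ‖T‖ has a subsequence converging in norm to α·x₀ for some α ∈ 𝕂 with |α| = 1. Then T is a smooth point of the space 𝓛(X,Y) with the operator norm. -/
open Filter Topology Metric

/-- A bounded sequence of functionals has a weak-* limit along any ultrafilter. -/
theorem exists_weakStar_limit_of_norm_le_one {ι 𝕜 Y : Type*} [RCLike 𝕜]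
    [NormedAddCommGroup Y] [NormedSpace 𝕜 Y] (U : Ultrafilter ι) (ψ : ι → Y →L[𝕜] 𝕜)
    (hψ : ∀ n, ‖ψ n‖ ≤ 1) :
    ∃ φ : Y →L[𝕜] 𝕜, ‖φ‖ ≤ 1 ∧ ∀ y, Tendsto (fun n => ψ n y) U (𝓝 (φ y)) := by
  have hK := WeakDual.isCompact_closedBall (𝕜 := 𝕜) (E := Y) 0 1
  obtain ⟨φ, hφ, hlim⟩ := hK.ultrafilter_le_nhds
    (U.map fun n => StrongDual.toWeakDual (ψ n)) (by
      rw [le_principal_iff, Ultrafilter.coe_map, mem_map]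
      exact Eventually.of_forall fun n => by simpa using hψ n)
  refine ⟨WeakDual.toStrongDual φ, by simpa using hφ, fun y => ?_⟩
  exact ((WeakDual.eval_continuous y).tendsto φ).comp hlim

/-- The duality pairing is jointly continuous along norm-bounded pointwise convergent functionals
and norm convergent vectors. -/
theorem tendsto_apply_of_norm_le_one {ι 𝕜 Y : Type*} [RCLike 𝕜]
    [NormedAddCommGroup Y] [NormedSpace 𝕜 Y] {l : Filter ι} {ψ : ι → Y →L[𝕜] 𝕜}
    (hψ : ∀ n, ‖ψ n‖ ≤ 1) {φ : Y →L[𝕜] 𝕜} (hφ : ∀ y, Tendsto (fun n => ψ n y) l (𝓝 (φ y)))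
    {z : ι → Y} {y : Y} (hz : Tendsto z l (𝓝 y)) :
    Tendsto (fun n => ψ n (z n)) l (𝓝 (φ y)) := by
  have hdiff : Tendsto (fun n => ψ n (z n - y)) l (𝓝 0) := by
    refine squeeze_zero_norm (fun n => ?_) (tendsto_iff_norm_sub_tendsto_zero.1 hz)
    simpa using (ψ n).le_of_opNorm_le (hψ n) (z n - y)
  simpa using hdiff.add (hφ y)

/-- A functional supporting `T` is dominated on `A` by functionals almost supporting `T`
at vectors of the unit ball that almost attain the norm. -/
theorem exists_almost_supporting_pair {𝕜 X Y : Type*} [RCLike 𝕜]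
    [NormedAddCommGroup X] [NormedSpace 𝕜 X] [NormedAddCommGroup Y] [NormedSpace 𝕜 Y]
    {T : X →L[𝕜] Y} {Φ : (X →L[𝕜] Y) →L[𝕜] 𝕜} (hΦ : ‖Φ‖ = 1) (hΦT : Φ T = (‖T‖ : 𝕜))
    (A : X →L[𝕜] Y) {t : ℝ} (ht : 0 < t) :
    ∃ (x : X) (ψ : Y →L[𝕜] 𝕜), ‖x‖ ≤ 1 ∧ ‖ψ‖ ≤ 1 ∧
      RCLike.re (Φ A) ≤ RCLike.re (ψ (A x)) + t ∧
      ‖T‖ - (2 * ‖A‖ + t) * t ≤ RCLike.re (ψ (T x)) := by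
  set S : X →L[𝕜] Y := T + (t : 𝕜) • A with hS
  obtain ⟨x, hx, hxS⟩ := S.exists_lt_apply_of_lt_opNorm (r := ‖S‖ - t ^ 2) (by nlinarith)
  obtain ⟨ψ, hψ, hψS⟩ := exists_dual_vector'' 𝕜 (S x)
  have hsum : RCLike.re (ψ (T x)) + t * RCLike.re (ψ (A x)) = ‖S x‖ := by
    have := congrArg RCLike.re hψS
    simpa [hS] using this
  have hΦS : ‖T‖ + t * RCLike.re (Φ A) ≤ ‖S‖ := by
    have h := (RCLike.re_le_norm (Φ S)).trans (Φ.le_of_opNorm_le hΦ.le S)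
    simpa [hS, hΦT] using h
  have hTx : RCLike.re (ψ (T x)) ≤ ‖T‖ :=
    (RCLike.re_le_norm _).trans <| (ψ.le_of_opNorm_le hψ _).trans <| by
      simpa using T.unit_le_opNorm x hx.le
  have hAx : RCLike.re (ψ (A x)) ≤ ‖A‖ :=
    (RCLike.re_le_norm _).trans <| (ψ.le_of_opNorm_le hψ _).trans <| by
      simpa using A.unit_le_opNorm x hx.le
  have hΦA : -‖A‖ ≤ RCLike.re (Φ A) := by
    have h := (RCLike.abs_re_le_norm (Φ A)).trans (Φ.le_of_opNorm_le hΦ.le A)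
    rw [one_mul] at h
    exact (abs_le.1 h).1
  refine ⟨x, ψ, hx.le, hψ, ?_, ?_⟩
  · refine le_of_mul_le_mul_left ?_ ht
    nlinarith
  · nlinarith

/-- A functional in the unit ball taking a value `c > 0` at a vector of norm at most `c` has
norm one. -/
theorem norm_eq_one_of_apply_eq {𝕜 E : Type*} [RCLike 𝕜]
    [NormedAddCommGroup E] [NormedSpace 𝕜 E] {f : E →L[𝕜] 𝕜} {e : E} {c : ℝ} (hc : 0 < c)
    (hf : ‖f‖ ≤ 1) (he : ‖e‖ ≤ c) (hfe : f e = (c : 𝕜)) : ‖f‖ = 1 := by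
  refine hf.antisymm ?_
  have h := f.le_opNorm_of_le he
  rw [hfe, RCLike.norm_ofReal, abs_of_pos hc] at h
  exact (le_mul_iff_one_le_left hc).1 h

/-- Two continuous linear functionals agree if the real part of one dominates that of the other. -/
theorem eq_of_forall_re_le {𝕜 E : Type*} [RCLike 𝕜] [NormedAddCommGroup E] [NormedSpace 𝕜 E]
    {f g : E →L[𝕜] 𝕜} (h : ∀ x, RCLike.re (f x) ≤ RCLike.re (g x)) : f = g := by
  ext x
  rw [← sub_eq_zero, ← norm_le_zero_iff]
  have hx := h (star (f x - g x) • x)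
  rw [f.map_smul, g.map_smul, ← sub_nonpos, ← map_sub, ← smul_sub, smul_eq_mul, RCLike.star_def,
    RCLike.conj_mul, ← RCLike.ofReal_pow, RCLike.ofReal_re] at hx
  nlinarith [norm_nonneg (f x - g x)]

/-- A sufficient condition for a nonzero bounded linear operator `T : X → Y` to be a smooth
point of `𝓛(X,Y)`: there is `x₀ ∈ S_X` such that `T x₀` is a smooth point of `Y` and every
sequence in `B_X` along which `‖T·‖` tends to `‖T‖` has a subsequence converging to a
unimodular multiple of `x₀`. -/
theorem smooth_operator_sufficient_condition {𝕜 X Y : Type*} [RCLike 𝕜]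
    [NormedAddCommGroup X] [NormedSpace 𝕜 X] [CompleteSpace X]
    [NormedAddCommGroup Y] [NormedSpace 𝕜 Y] [CompleteSpace Y]
    (T : X →L[𝕜] Y) (hT : T ≠ 0) (x₀ : X) (hx₀ : ‖x₀‖ = 1)
    (h1 : ∃! φ : Y →L[𝕜] 𝕜, ‖φ‖ = 1 ∧ φ (T x₀) = (‖T x₀‖ : 𝕜))
    (h2 : ∀ x : ℕ → X, (∀ n, ‖x n‖ ≤ 1) →
      Tendsto (fun n => ‖T (x n)‖) atTop (𝓝 ‖T‖) →
      ∃ (α : 𝕜) (σ : ℕ → ℕ), ‖α‖ = 1 ∧ StrictMono σ ∧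
        Tendsto (fun n => x (σ n)) atTop (𝓝 (α • x₀))) :
    ∃! Φ : (X →L[𝕜] Y) →L[𝕜] 𝕜, ‖Φ‖ = 1 ∧ Φ T = (‖T‖ : 𝕜) := by
  obtain ⟨φ, ⟨hφ, hφT⟩, huniq⟩ := h1
  have hTpos : 0 < ‖T‖ := norm_pos_iff.2 hT
  have ht : Tendsto (fun n : ℕ => 1 / ((n : ℝ) + 1)) atTop (𝓝 0) :=
    tendsto_one_div_add_atTop_nhds_zero_nat
  have hattain : ‖T x₀‖ = ‖T‖ := by
    have hex (n : ℕ) : ∃ x : X, ‖x‖ < 1 ∧ ‖T‖ - 1 / ((n : ℝ) + 1) < ‖T x‖ :=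
      T.exists_lt_apply_of_lt_opNorm (sub_lt_self _ (by positivity))
    choose x hx hxT using hex
    have hlim : Tendsto (fun n => ‖T (x n)‖) atTop (𝓝 ‖T‖) :=
      tendsto_of_tendsto_of_tendsto_of_le_of_le (by simpa using ht.const_sub ‖T‖)
        tendsto_const_nhds (fun n => (hxT n).le) fun n => T.unit_le_opNorm _ (hx n).le
    obtain ⟨α, σ, hα, hσ, hconv⟩ := h2 x (fun n => (hx n).le) hlim
    have h := tendsto_nhds_unique ((T.continuous.tendsto _).comp hconv).norm
      (hlim.comp hσ.tendsto_atTop)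
    simpa [norm_smul, hα] using h
  rw [hattain] at hφT huniq
  set Φ₀ : (X →L[𝕜] Y) →L[𝕜] 𝕜 := φ.comp (ContinuousLinearMap.apply 𝕜 Y x₀) with hΦ₀
  refine ⟨Φ₀, ⟨norm_eq_one_of_apply_eq hTpos ?_ le_rfl hφT, hφT⟩, ?_⟩
  · refine ContinuousLinearMap.opNorm_le_bound _ zero_le_one fun A => ?_
    simpa [hΦ₀, hφ, hx₀] using φ.le_opNorm_of_le (A.le_opNorm x₀)
  rintro Φ ⟨hΦ, hΦT⟩
  refine eq_of_forall_re_le fun A => ?_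
  choose x ψ hx hψ hΦA hlow using fun n : ℕ =>
    exists_almost_supporting_pair hΦ hΦT A (t := 1 / ((n : ℝ) + 1)) (by positivity)
  have hψTx (n : ℕ) : ‖ψ n (T (x n))‖ ≤ ‖T (x n)‖ := by
    simpa using (ψ n).le_of_opNorm_le (hψ n) (T (x n))
  have hlowlim : Tendsto (fun n : ℕ => ‖T‖ - (2 * ‖A‖ + 1 / ((n : ℝ) + 1)) * (1 / ((n : ℝ) + 1)))
      atTop (𝓝 ‖T‖) := by
    simpa using ((ht.const_add (2 * ‖A‖)).mul ht).const_sub ‖T‖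
  have hlim : Tendsto (fun n => ‖T (x n)‖) atTop (𝓝 ‖T‖) :=
    tendsto_of_tendsto_of_tendsto_of_le_of_le hlowlim tendsto_const_nhds
      (fun n => (hlow n).trans ((RCLike.re_le_norm _).trans (hψTx n)))
      fun n => T.unit_le_opNorm _ (hx n)
  obtain ⟨α, σ, hα, hσ, hconv⟩ := h2 x hx hlim
  set U : Ultrafilter ℕ := hyperfilter ℕ
  have hU : (U : Filter ℕ) ≤ atTop := Nat.hyperfilter_le_atTop
  obtain ⟨χ, hχ, hχlim⟩ := exists_weakStar_limit_of_norm_le_one U (fun n => ψ (σ n))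
    fun n => hψ (σ n)
  have hpair (B : X →L[𝕜] Y) : Tendsto (fun n => RCLike.re (ψ (σ n) (B (x (σ n))))) U
      (𝓝 (RCLike.re (χ (B (α • x₀))))) :=
    (RCLike.continuous_re.tendsto _).comp <| tendsto_apply_of_norm_le_one (fun n => hψ (σ n)) hχlim
      ((B.continuous.tendsto _).comp (hconv.mono_left hU))
  have hσU : Tendsto σ U atTop := hσ.tendsto_atTop.mono_left hU
  have hre : ‖T‖ ≤ RCLike.re (χ (T (α • x₀))) :=
    le_of_tendsto_of_tendsto' (hlowlim.comp hσU) (hpair T) fun n => hlow (σ n)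
  have hle : ‖χ (T (α • x₀))‖ ≤ ‖T‖ := by
    simpa [norm_smul, hα, hattain] using χ.le_of_opNorm_le hχ (T (α • x₀))
  have hχT : (α • χ) (T x₀) = (‖T‖ : 𝕜) := by
    have hn : ‖χ (T (α • x₀))‖ = ‖T‖ := hle.antisymm (hre.trans (RCLike.re_le_norm _))
    have h := RCLike.norm_le_re_iff_eq_norm.1 (hle.trans hre)
    rw [hn] at h
    simpa using h
  have hαχ : α • χ = φ :=
    huniq _ ⟨norm_eq_one_of_apply_eq hTpos (by simpa [norm_smul, hα] using hχ) hattain.le hχT, hχT⟩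
  have hfinal : RCLike.re (Φ A) ≤ RCLike.re (χ (A (α • x₀))) + 0 :=
    ge_of_tendsto' ((hpair A).add (ht.comp hσU)) fun n => hΦA (σ n)
  simpa [hΦ₀, ← hαχ] using hfinal
end

section
/- Let X be a complex reflexive Banach space, let Y be a complex Banach space, and let T, A : X → Y be compact linear operators such that the norm attainment set M_T = { x ∈ S_X : ‖Tx‖ = ‖T‖ } is connected. Then T ⊥_B A (with respect to the operator norm) if and only if for every γ ∈ 𝕋 there exists x ∈ M_T such that Tx ⊥_γ Ax. -/
open Filter Topology Metric

section WeakCompactness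

variable {X Y ι : Type*} [NormedAddCommGroup X] [NormedSpace ℂ X]
  [NormedAddCommGroup Y] [NormedSpace ℂ Y]

/-- In a reflexive space, a family in the closed unit ball converges weakly along every
ultrafilter to a point of the closed unit ball. -/
theorem exists_weak_limit_of_reflexive
    (hrefl : Function.Surjective (NormedSpace.inclusionInDoubleDual ℂ X))
    (U : Ultrafilter ι) (x : ι → X) (hx : ∀ i, ‖x i‖ ≤ 1) :
    ∃ x₀ : X, ‖x₀‖ ≤ 1 ∧
      ∀ f : StrongDual ℂ X, Tendsto (fun i => f (x i)) U (𝓝 (f x₀)) := by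
  let J : X → WeakDual ℂ (StrongDual ℂ X) :=
    fun v => StrongDual.toWeakDual (NormedSpace.inclusionInDoubleDual ℂ X v)
  have hK := WeakDual.isCompact_closedBall (𝕜 := ℂ) (0 : StrongDual ℂ (StrongDual ℂ X)) 1
  have hnorm : ∀ v, ‖NormedSpace.inclusionInDoubleDual ℂ X v‖ = ‖v‖ :=
    fun v => (NormedSpace.inclusionInDoubleDualLi ℂ).norm_map v
  obtain ⟨φ, hφ, hlim⟩ := hK.ultrafilter_le_nhds (U.map (fun i => J (x i))) (by
    rw [le_principal_iff]
    refine Filter.mem_map.2 (Filter.univ_mem' fun i => ?_)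
    simpa [J] using (hnorm (x i)).trans_le (hx i))
  obtain ⟨x₀, hx₀⟩ := hrefl (WeakDual.toStrongDual φ)
  refine ⟨x₀, ?_, fun f => ?_⟩
  · rw [← hnorm, hx₀]
    simpa using hφ
  · have hf : φ f = f x₀ := (DFunLike.congr_fun hx₀ f).symm
    rw [← hf]
    exact ((WeakDual.eval_continuous f).tendsto φ).comp hlim

/-- A compact operator maps weakly convergent bounded ultrafilters to norm convergent ones. -/
theorem IsCompactOperator.tendsto_of_weak_limit {T : X →L[ℂ] Y} (hT : IsCompactOperator T)
    (U : Ultrafilter ι) (x : ι → X) (hx : ∀ i, ‖x i‖ ≤ 1) (x₀ : X)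
    (hlim : ∀ f : StrongDual ℂ X, Tendsto (fun i => f (x i)) U (𝓝 (f x₀))) :
    Tendsto (fun i => T (x i)) U (𝓝 (T x₀)) := by
  have hK : IsCompact (closure (T '' closedBall 0 1)) :=
    hT.isCompact_closure_image_closedBall 1
  obtain ⟨y, -, hy⟩ := hK.ultrafilter_le_nhds (U.map (fun i => T (x i))) (by
    rw [le_principal_iff]
    exact Filter.mem_map.2 (Filter.univ_mem' fun i =>
      subset_closure ⟨x i, by simpa using hx i, rfl⟩))
  have hy' : Tendsto (fun i => T (x i)) U (𝓝 y) := hy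
  have hTy : T x₀ = y := by
    refine (SeparatingDual.eq_iff_forall_dual_eq (R := ℂ)).2 fun g => ?_
    exact tendsto_nhds_unique (hlim (g.comp T)) ((g.continuous.tendsto y).comp hy')
  rwa [hTy]

end WeakCompactness

section Orthogonality

variable {X Y : Type*} [NormedAddCommGroup X] [NormedSpace ℂ X]
  [NormedAddCommGroup Y] [NormedSpace ℂ Y]

/-- Convexity of the norm along a line, in a form comparing two positive parameters. -/
theorem mul_norm_add_smul_le (u v : Y) {s t : ℝ} (hs : 0 ≤ s) (hst : s ≤ t) :
    t * ‖u + (s : ℂ) • v‖ ≤ (t - s) * ‖u‖ + s * ‖u + (t : ℂ) • v‖ := by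
  have h : (t : ℂ) • (u + (s : ℂ) • v)
      = ((t - s : ℝ) : ℂ) • u + (s : ℂ) • (u + (t : ℂ) • v) := by
    push_cast
    module
  have h' := congrArg norm h
  rw [norm_smul, Complex.norm_of_nonneg (hs.trans hst)] at h'
  rw [h']
  refine (norm_add_le _ _).trans_eq ?_
  rw [norm_smul, norm_smul, Complex.norm_of_nonneg (sub_nonneg.2 hst),
    Complex.norm_of_nonneg hs]

/-- For every pair of vectors, the norm does not decrease on one of the two half-lines. -/
theorem norm_le_norm_add_smul_or (u v : Y) :
    (∀ t : ℝ, 0 ≤ t → ‖u‖ ≤ ‖u + (t : ℂ) • v‖) ∨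
      (∀ t : ℝ, 0 ≤ t → ‖u‖ ≤ ‖u + (t : ℂ) • -v‖) := by
  by_contra! ⟨⟨a, ha, hau⟩, b, hb, hbu⟩
  have h : ((a + b : ℝ) : ℂ) • u
      = (b : ℂ) • (u + (a : ℂ) • v) + (a : ℂ) • (u + (b : ℂ) • -v) := by
    push_cast
    module
  have h' := congrArg norm h
  rw [norm_smul, Complex.norm_of_nonneg (add_nonneg ha hb)] at h'
  have h₂ := norm_add_le ((b : ℂ) • (u + (a : ℂ) • v)) ((a : ℂ) • (u + (b : ℂ) • -v))
  rw [norm_smul, norm_smul, Complex.norm_of_nonneg ha, Complex.norm_of_nonneg hb] at h₂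
  have ha' : 0 < a := ha.lt_of_ne fun h0 => by simp [← h0] at hau
  nlinarith [mul_lt_mul_of_pos_left hbu ha', mul_le_mul_of_nonneg_left hau.le hb]

/-- If the operator norm does not decrease from `T` in the direction `B`, then it is witnessed
by a vector of the unit ball at which the norm does not decrease either. -/
theorem exists_norm_le_apply_add_smul
    (hrefl : Function.Surjective (NormedSpace.inclusionInDoubleDual ℂ X))
    {T B : X →L[ℂ] Y} (hT : IsCompactOperator T) (hB : IsCompactOperator B)
    (h : ∀ t : ℝ, 0 < t → ‖T‖ ≤ ‖T + (t : ℂ) • B‖) :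
    ∃ x : X, ‖x‖ ≤ 1 ∧ ∀ t : ℝ, 0 ≤ t → ‖T‖ ≤ ‖T x + (t : ℂ) • B x‖ := by
  have hex : ∀ s : ℝ, ∃ x : X, ‖x‖ ≤ 1 ∧
      (0 < s → ‖T‖ - s ^ 2 ≤ ‖T x + (s : ℂ) • B x‖) := by
    intro s
    by_cases hs : 0 < s
    · obtain ⟨x, hx, hlt⟩ := (T + (s : ℂ) • B).exists_lt_apply_of_lt_opNorm
        (r := ‖T‖ - s ^ 2) (by nlinarith [h s hs, pow_pos hs 2])
      exact ⟨x, hx.le, fun _ => hlt.le⟩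
    · exact ⟨0, by simp, fun hs' => absurd hs' hs⟩
  choose x hx hxs using hex
  let U : Ultrafilter ℝ := Ultrafilter.of (𝓝[>] (0 : ℝ))
  have hU : (U : Filter ℝ) ≤ 𝓝[>] (0 : ℝ) := Ultrafilter.of_le _
  obtain ⟨x₀, hx₀, hlim⟩ := exists_weak_limit_of_reflexive hrefl U x hx
  have hTlim := hT.tendsto_of_weak_limit U x hx x₀ hlim
  have hBlim := hB.tendsto_of_weak_limit U x hx x₀ hlim
  have hpos : ∀ t : ℝ, 0 < t → ‖T‖ ≤ ‖T x₀ + (t : ℂ) • B x₀‖ := by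
    intro t ht
    have hl : Tendsto (fun s : ℝ => ‖T‖ - t * s) U (𝓝 ‖T‖) := by
      have : Tendsto (fun s : ℝ => ‖T‖ - t * s) (𝓝 0) (𝓝 (‖T‖ - t * 0)) :=
        Continuous.tendsto (by fun_prop) 0
      rw [mul_zero, sub_zero] at this
      exact this.mono_left (hU.trans nhdsWithin_le_nhds)
    refine le_of_tendsto_of_tendsto hl (hTlim.add (hBlim.const_smul (t : ℂ))).norm ?_
    have hev : ∀ᶠ s in 𝓝[>] (0 : ℝ), s ∈ Set.Ioo 0 t := Ioo_mem_nhdsGT ht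
    filter_upwards [hU hev] with s hs
    have hc := mul_norm_add_smul_le (T (x s)) (B (x s)) hs.1.le hs.2.le
    have hTx : ‖T (x s)‖ ≤ ‖T‖ := T.unit_le_opNorm _ (hx s)
    have h₁ := mul_le_mul_of_nonneg_left (hxs s hs.1) ht.le
    have h₂ := mul_le_mul_of_nonneg_left hTx (sub_nonneg.2 hs.2.le)
    refine le_of_mul_le_mul_left ?_ hs.1
    nlinarith
  refine ⟨x₀, hx₀, fun t ht => ?_⟩
  have hcl : IsClosed {t : ℝ | ‖T‖ ≤ ‖T x₀ + (t : ℂ) • B x₀‖} :=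
    isClosed_le continuous_const (by fun_prop)
  have hsub : closure (Set.Ioi (0 : ℝ)) ⊆ {t : ℝ | ‖T‖ ≤ ‖T x₀ + (t : ℂ) • B x₀‖} :=
    hcl.closure_subset_iff.2 hpos
  rw [closure_Ioi] at hsub
  exact hsub ht

/-- For a nonzero operator, the witness can be taken in the norm attainment set. -/
theorem exists_mem_normAttainment_norm_le
    (hrefl : Function.Surjective (NormedSpace.inclusionInDoubleDual ℂ X))
    {T B : X →L[ℂ] Y} (hT0 : T ≠ 0) (hT : IsCompactOperator T) (hB : IsCompactOperator B)
    (h : ∀ t : ℝ, 0 < t → ‖T‖ ≤ ‖T + (t : ℂ) • B‖) :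
    ∃ x : X, (‖x‖ = 1 ∧ ‖T x‖ = ‖T‖) ∧
      ∀ t : ℝ, 0 ≤ t → ‖T x‖ ≤ ‖T x + (t : ℂ) • B x‖ := by
  obtain ⟨x, hx, hxt⟩ := exists_norm_le_apply_add_smul hrefl hT hB h
  have hle : ‖T‖ ≤ ‖T x‖ := by simpa using hxt 0 le_rfl
  have hTx : ‖T x‖ = ‖T‖ := le_antisymm (T.unit_le_opNorm x hx) hle
  refine ⟨x, ⟨le_antisymm hx ?_, hTx⟩, fun t ht => hTx.trans_le (hxt t ht)⟩
  refine le_of_mul_le_mul_left ?_ (norm_pos_iff.2 hT0)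
  simpa using hle.trans (T.le_opNorm x)

/-- The set of vectors at which the norm does not decrease along a half-line is closed. -/
theorem isClosed_setOf_norm_le_apply_add_smul (T B : X →L[ℂ] Y) :
    IsClosed {x : X | ∀ t : ℝ, 0 ≤ t → ‖T x‖ ≤ ‖T x + (t : ℂ) • B x‖} := by
  simp only [Set.ofPred_forall]
  exact isClosed_iInter fun t => isClosed_iInter fun _ =>
    isClosed_le (by fun_prop) (by fun_prop)

end Orthogonality

/-- Bhatia-Šemrl type theorem for compact operators on a complex reflexive Banach space: if
the norm attainment set `M_T` is connected, then `T ⊥_B A` iff for every unimodular `γ` there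
is `x ∈ M_T` with `T x ⊥_γ A x` (directional orthogonality). -/
theorem BhatiaSemrl_compact_operators_complex {X Y : Type*}
    [NormedAddCommGroup X] [NormedSpace ℂ X] [CompleteSpace X]
    [NormedAddCommGroup Y] [NormedSpace ℂ Y] [CompleteSpace Y]
    (hrefl : Function.Surjective (NormedSpace.inclusionInDoubleDual ℂ X))
    (T A : X →L[ℂ] Y) (hT : IsCompactOperator T) (hA : IsCompactOperator A)
    (hM : IsConnected {x : X | ‖x‖ = 1 ∧ ‖T x‖ = ‖T‖}) :
    (∀ lam : ℂ, ‖T + lam • A‖ ≥ ‖T‖) ↔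
      ∀ γ : ℂ, ‖γ‖ = 1 → ∃ x : X, ‖x‖ = 1 ∧ ‖T x‖ = ‖T‖ ∧
        ∀ r : ℝ, ‖T x + ((r : ℂ) * γ) • A x‖ ≥ ‖T x‖ := by
  constructor
  · intro h γ _
    rcases eq_or_ne T 0 with rfl | hT0
    · obtain ⟨x, hx, hTx⟩ := hM.nonempty
      exact ⟨x, hx, hTx, fun r => by simp⟩
    have hB : IsCompactOperator (γ • A) := hA.smul γ
    have hB' : IsCompactOperator (-(γ • A)) := hB.neg
    have hpos := exists_mem_normAttainment_norm_le hrefl hT0 hT hB fun t _ => by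
      simpa [smul_smul] using h (t * γ)
    have hneg := exists_mem_normAttainment_norm_le hrefl hT0 hT hB' fun t _ => by
      simpa [smul_smul] using h (-(t * γ))
    obtain ⟨x, ⟨hx, hTx⟩, hx₁, hx₂⟩ := isPreconnected_closed_iff.1 hM.isPreconnected _ _
      (isClosed_setOf_norm_le_apply_add_smul T (γ • A))
      (isClosed_setOf_norm_le_apply_add_smul T (-(γ • A)))
      (fun x _ => norm_le_norm_add_smul_or (T x) ((γ • A) x)) hpos hneg
    refine ⟨x, hx, hTx, fun r => ?_⟩
    rcases le_total 0 r with hr | hr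
    · simpa [smul_smul] using hx₁ r hr
    · simpa [smul_smul] using hx₂ (-r) (neg_nonneg.2 hr)
  · intro h lam
    obtain ⟨γ, hγ, hlam⟩ : ∃ γ : ℂ, ‖γ‖ = 1 ∧ ((‖lam‖ : ℝ) : ℂ) * γ = lam :=
      ⟨Complex.exp (lam.arg * Complex.I), Complex.norm_exp_ofReal_mul_I _,
        Complex.norm_mul_exp_arg_mul_I lam⟩
    obtain ⟨x, hx, hTx, hxr⟩ := h γ hγ
    have hr := hxr ‖lam‖
    rw [hlam, hTx] at hr
    exact hr.le.trans ((T + lam • A).unit_le_opNorm x hx.le)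
end

section
/- Let Z be a Banach space over 𝕂 (𝕂 = ℝ or ℂ), let u ∈ Z with ‖u‖ = 1, and define v_u(w) = sup{ |φ(w)| : φ ∈ Z*, ‖φ‖ = 1, φ(u) = 1 } for w ∈ Z. Assume u is a vertex, i.e., v_u(w) = 0 implies w = 0. Let z ∈ Z be nonzero and suppose z is smooth with respect to v_u, i.e., there is exactly one linear functional ψ : Z → 𝕂 satisfying |ψ(w)| ≤ v_u(w) for all w ∈ Z and ψ(z) = v_u(z). Then z is not Birkhoff-James orthogonal to u with respect to v_u; that is, there exists λ ∈ 𝕂 with v_u(z + λu) < v_u(z). -/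
open Filter Topology Metric

/-- The numerical radius `v_u(w)` of `w` with respect to a norm-one element `u` of a Banach
space: the supremum of `‖φ w‖` over the states `φ` relative to `u`. -/
noncomputable def numericalRadius (𝕜 : Type*) {Z : Type*} [RCLike 𝕜]
    [NormedAddCommGroup Z] [NormedSpace 𝕜 Z] (u w : Z) : ℝ :=
  sSup ((fun φ : Z →L[𝕜] 𝕜 => ‖φ w‖) '' {φ | ‖φ‖ = 1 ∧ φ u = 1})

section States

variable {𝕜 Z : Type*} [RCLike 𝕜] [NormedAddCommGroup Z] [NormedSpace 𝕜 Z]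

/-- The values at `w` of the states relative to a norm-one element `u` form a compact set. -/
lemma isCompact_state_values {u : Z} (hu : ‖u‖ = 1) (w : Z) :
    IsCompact ((fun φ : Z →L[𝕜] 𝕜 => φ w) '' {φ | ‖φ‖ = 1 ∧ φ u = 1}) := by
  have hball := WeakDual.isCompact_closedBall (0 : StrongDual 𝕜 Z) 1
  have hclosed : IsClosed {φ : WeakDual 𝕜 Z | φ u = 1} :=
    isClosed_eq (WeakDual.eval_continuous u) continuous_const
  convert (hball.inter_right hclosed).image (WeakDual.eval_continuous w) using 1
  ext y
  constructor
  · rintro ⟨φ, ⟨hn, h1⟩, rfl⟩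
    refine ⟨StrongDual.toWeakDual φ, ⟨?_, h1⟩, rfl⟩
    simp [hn]
  · rintro ⟨φ, ⟨hn, h1⟩, rfl⟩
    refine ⟨WeakDual.toStrongDual φ, ⟨le_antisymm (by simpa using hn) ?_, h1⟩, rfl⟩
    have h := (WeakDual.toStrongDual φ).le_opNorm u
    have h1' : WeakDual.toStrongDual φ u = 1 := h1
    rwa [h1', hu, norm_one, mul_one] at h

/-- States dominate: `‖φ w‖ ≤ v_u(w)`. -/
lemma norm_state_le_numericalRadius {u : Z} {φ : Z →L[𝕜] 𝕜} (hφ : ‖φ‖ = 1) (hφu : φ u = 1)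
    (w : Z) : ‖φ w‖ ≤ numericalRadius 𝕜 u w := by
  refine le_csSup ⟨‖w‖, ?_⟩ ⟨φ, ⟨hφ, hφu⟩, rfl⟩
  rintro _ ⟨χ, ⟨hχ, -⟩, rfl⟩
  simpa [hχ] using χ.le_opNorm w

/-- The numerical radius is attained at some state. -/
lemma exists_state_norm_eq_numericalRadius {u : Z} (hu : ‖u‖ = 1) (w : Z) :
    ∃ φ : Z →L[𝕜] 𝕜, ‖φ‖ = 1 ∧ φ u = 1 ∧ ‖φ w‖ = numericalRadius 𝕜 u w := by
  obtain ⟨χ, hχ, hχu⟩ := exists_dual_vector 𝕜 u (by simp [hu])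
  have hχu' : χ u = 1 := by simpa [hu] using hχu
  obtain ⟨_, ⟨φ, ⟨hφ, hφu⟩, rfl⟩, hmax⟩ := (isCompact_state_values (𝕜 := 𝕜) hu w).exists_isMaxOn
    ⟨_, χ, ⟨hχ, hχu'⟩, rfl⟩ continuous_norm.continuousOn
  refine ⟨φ, hφ, hφu, le_antisymm (norm_state_le_numericalRadius hφ hφu w) ?_⟩
  refine csSup_le ⟨_, φ, ⟨hφ, hφu⟩, rfl⟩ ?_
  rintro _ ⟨ρ, hρ, rfl⟩
  exact hmax ⟨ρ, hρ, rfl⟩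

end States

/-- If a compact set in the closed disc of radius `r > 0` meets the bounding circle at most at
`r * c`, then a small translation by a negative multiple of `c` moves it into the open disc. -/
lemma exists_norm_sub_lt_of_isCompact {𝕜 : Type*} [RCLike 𝕜] {W : Set 𝕜} (hW : IsCompact W)
    {r : ℝ} (hr : 0 < r) {c : 𝕜} (hc : ‖c‖ = 1) (hle : ∀ w ∈ W, ‖w‖ ≤ r)
    (huniq : ∀ w ∈ W, ‖w‖ = r → w = r * c) : ∃ t : ℝ, ∀ w ∈ W, ‖w - t * c‖ < r := by
  have hcont : Continuous fun w : 𝕜 => RCLike.re (inner 𝕜 c w) := by fun_prop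
  have hA : IsCompact (W ∩ {w | RCLike.re (inner 𝕜 c w) ≤ r / 2}) :=
    hW.inter_right (isClosed_le hcont continuous_const)
  obtain ⟨s, hs0, hsr, hs⟩ : ∃ s : ℝ, 0 ≤ s ∧ s < r ∧
      ∀ w ∈ W, RCLike.re (inner 𝕜 c w) ≤ r / 2 → ‖w‖ ≤ s := by
    rcases (W ∩ {w | RCLike.re (inner 𝕜 c w) ≤ r / 2}).eq_empty_or_nonempty with hE | hE
    · exact ⟨0, le_rfl, hr, fun w hw hw' => (Set.eq_empty_iff_forall_notMem.mp hE w ⟨hw, hw'⟩).elim⟩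
    · obtain ⟨a, ⟨haW, haA⟩, hmax⟩ := hA.exists_isMaxOn hE continuous_norm.continuousOn
      refine ⟨‖a‖, norm_nonneg a, lt_of_le_of_ne (hle a haW) fun h => ?_,
        fun w hw hw' => hmax ⟨hw, hw'⟩⟩
      have haA' : RCLike.re (inner 𝕜 c a) ≤ r / 2 := haA
      have hin : inner 𝕜 c ((r : 𝕜) * c) = (r : 𝕜) := by
        rw [← smul_eq_mul, inner_smul_right, inner_self_eq_norm_sq_to_K, hc]
        simp
      rw [huniq a haW h, hin, RCLike.ofReal_re] at haA'
      linarith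
  refine ⟨(r - s) / 2, fun w hw => ?_⟩
  have htc : ‖(((r - s) / 2 : ℝ) : 𝕜) * c‖ = (r - s) / 2 := by
    rw [norm_mul, hc, mul_one, RCLike.norm_ofReal, abs_of_pos (by linarith)]
  rcases le_or_gt (RCLike.re (inner 𝕜 c w)) (r / 2) with h | h
  · have := norm_sub_le w ((((r - s) / 2 : ℝ) : 𝕜) * c)
    linarith [hs w hw h]
  · have hsq := norm_sub_sq (𝕜 := 𝕜) w ((((r - s) / 2 : ℝ) : 𝕜) * c)
    rw [← smul_eq_mul, inner_smul_right, smul_eq_mul, htc, RCLike.re_ofReal_mul,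
      inner_re_symm] at hsq
    refine lt_of_pow_lt_pow_left₀ 2 hr.le ?_
    nlinarith [hle w hw, norm_nonneg w, mul_pos (sub_pos.mpr hsr) (sub_pos.mpr h)]

/-- If `u` is a vertex of a Banach space `Z` and `z` is smooth in `(Z, v_u)`, then `z` is not
Birkhoff-James orthogonal to `u` with respect to the norm `v_u`. -/
theorem smooth_in_numerical_radius_not_orthogonal_to_vertex {𝕜 Z : Type*} [RCLike 𝕜]
    [NormedAddCommGroup Z] [NormedSpace 𝕜 Z] [CompleteSpace Z]
    (u : Z) (hu : ‖u‖ = 1)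
    (hvertex : ∀ w : Z, numericalRadius 𝕜 u w = 0 → w = 0)
    (z : Z) (hz : z ≠ 0)
    (hsmooth : ∃! ψ : Z →ₗ[𝕜] 𝕜, (∀ w : Z, ‖ψ w‖ ≤ numericalRadius 𝕜 u w) ∧
      ψ z = (numericalRadius 𝕜 u z : 𝕜)) :
    ∃ lam : 𝕜, numericalRadius 𝕜 u (z + lam • u) < numericalRadius 𝕜 u z := by
  obtain ⟨φ₀, hφ₀, hφ₀u, hφ₀z⟩ := exists_state_norm_eq_numericalRadius (𝕜 := 𝕜) hu z
  set r := numericalRadius 𝕜 u z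
  have hr : 0 < r :=
    lt_of_le_of_ne (hφ₀z ▸ norm_nonneg _) fun h => hz (hvertex z h.symm)
  -- A state attaining the radius, rotated by a unimodular factor, is a support functional at `z`.
  have hsupport : ∀ φ : Z →L[𝕜] 𝕜, ‖φ‖ = 1 → φ u = 1 → ‖φ z‖ = r →
      (∀ w, ‖(((r : 𝕜) / φ z) • (φ : Z →ₗ[𝕜] 𝕜)) w‖ ≤ numericalRadius 𝕜 u w) ∧
        (((r : 𝕜) / φ z) • (φ : Z →ₗ[𝕜] 𝕜)) z = (r : 𝕜) := by
    intro φ hφ hφu hφz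
    have h0 : φ z ≠ 0 := norm_ne_zero_iff.mp (hφz ▸ hr.ne')
    refine ⟨fun w => ?_, by simp [h0]⟩
    have := norm_state_le_numericalRadius hφ hφu w
    simpa [hφz, abs_of_pos hr, hr.ne'] using this
  have hrK : (r : 𝕜) ≠ 0 := RCLike.ofReal_ne_zero.mpr hr.ne'
  have huniq : ∀ w ∈ (fun φ : Z →L[𝕜] 𝕜 => φ z) '' {φ | ‖φ‖ = 1 ∧ φ u = 1},
      ‖w‖ = r → w = r * (φ₀ z / r) := by
    rintro _ ⟨φ, ⟨hφ, hφu⟩, rfl⟩ hφz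
    have h := LinearMap.congr_fun
      (hsmooth.unique (hsupport φ hφ hφu hφz) (hsupport φ₀ hφ₀ hφ₀u hφ₀z)) u
    have h0 : φ z ≠ 0 := norm_ne_zero_iff.mp (hφz ▸ hr.ne')
    have h0' : φ₀ z ≠ 0 := norm_ne_zero_iff.mp (hφ₀z ▸ hr.ne')
    simp [hφu, hφ₀u] at h
    field_simp at h ⊢
    exact h.symm
  obtain ⟨t, ht⟩ := exists_norm_sub_lt_of_isCompact (isCompact_state_values (𝕜 := 𝕜) hu z) hr
    (c := φ₀ z / r) (by simp [hφ₀z, abs_of_pos hr, hr.ne'])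
    (by rintro _ ⟨φ, ⟨hφ, hφu⟩, rfl⟩; exact norm_state_le_numericalRadius hφ hφu z) huniq
  refine ⟨-(t * (φ₀ z / r)), ?_⟩
  obtain ⟨φ, hφ, hφu, hφv⟩ := exists_state_norm_eq_numericalRadius (𝕜 := 𝕜) hu
    (z + (-(t * (φ₀ z / r)) : 𝕜) • u)
  rw [← hφv, map_add, map_smul, hφu, smul_eq_mul, mul_one, ← sub_eq_add_neg]
  exact ht _ ⟨φ, ⟨hφ, hφu⟩, rfl⟩
end

section
/- Let X be a Banach space over 𝕂 (𝕂 = ℝ or ℂ) of dimension at least two that is smooth (every nonzero element of X is a smooth point) and suppose the closed unit ball of X has a strongly exposed point. Then X does not have numerical index one; that is, there exists a bounded linear operator T : X → X with v(T) < ‖T‖, where v(T) = sup{ |x*(Tx)| : x ∈ S_X, x* ∈ S_{X*}, x*(x) = 1 } is the numerical radius of T. -/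
open Filter Topology Metric

/-- A functional on a space of dimension at least two has a kernel vector of norm one. -/
theorem exists_norm_eq_one_apply_eq_zero {𝕜 X : Type*} [RCLike 𝕜] [NormedAddCommGroup X]
    [NormedSpace 𝕜 X] (hdim : 2 ≤ Module.rank 𝕜 X) (f : X →L[𝕜] 𝕜) :
    ∃ y : X, ‖y‖ = 1 ∧ f y = 0 := by
  obtain ⟨y, hy, hfy⟩ : ∃ y : X, y ≠ 0 ∧ f y = 0 := by
    by_contra! h
    have hinj : Function.Injective (f : X →ₗ[𝕜] 𝕜) :=
      (injective_iff_map_eq_zero _).2 fun a ha => by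
        by_contra h0
        exact h a h0 ha
    have hle := LinearMap.lift_rank_le_of_injective _ hinj
    rw [Module.rank_self, Cardinal.lift_one, Cardinal.lift_le_one_iff] at hle
    exact absurd (hdim.trans hle) (by norm_num)
  exact ⟨((‖y‖⁻¹ : ℝ) : 𝕜) • y, by simp [norm_smul, hy], by simp [hfy]⟩

/-- A state `(x, φ)` can be rotated so that `f` is real and nonnegative at the vector. -/
theorem exists_rotated_state {𝕜 X : Type*} [RCLike 𝕜] [NormedAddCommGroup X]
    [NormedSpace 𝕜 X] (f φ : X →L[𝕜] 𝕜) (x : X) (hx : ‖x‖ = 1) (hφ : ‖φ‖ = 1)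
    (hφx : φ x = 1) (hfx : f x ≠ 0) :
    ∃ (z : X) (ψ : X →L[𝕜] 𝕜), ‖z‖ = 1 ∧ ‖ψ‖ = 1 ∧ ψ z = 1 ∧ f z = (‖f x‖ : 𝕜) ∧
      ∀ y, ‖ψ y‖ = ‖φ y‖ := by
  have hn : ((‖f x‖ : ℝ) : 𝕜) ≠ 0 := by simpa using hfx
  have hc : ‖(‖f x‖ : 𝕜) / f x‖ = 1 := by simp [hfx]
  have hc0 : (‖f x‖ : 𝕜) / f x ≠ 0 := div_ne_zero hn hfx
  refine ⟨((‖f x‖ : 𝕜) / f x) • x, ((‖f x‖ : 𝕜) / f x)⁻¹ • φ, ?_, ?_, ?_, ?_, fun y => ?_⟩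
  · rw [norm_smul, hc, hx, one_mul]
  · rw [norm_smul, norm_inv, hc, hφ, inv_one, one_mul]
  · simp only [smul_apply, map_smul, smul_eq_mul, hφx, mul_one]
    exact mul_inv_cancel₀ hc0
  · rw [map_smul, smul_eq_mul, div_mul_cancel₀ _ hfx]
  · rw [smul_apply, norm_smul, norm_inv, hc, inv_one, one_mul]

/-- If `f` is the only norm-one functional with value `1` at the unit vector `x₀`, then norm-one
functionals whose values at `x₀` tend to `1` converge to `f` pointwise along some ultrafilter. -/
theorem exists_ultrafilter_tendsto_of_smooth {𝕜 X : Type*} [RCLike 𝕜] [NormedAddCommGroup X]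
    [NormedSpace 𝕜 X] {f : X →L[𝕜] 𝕜} {x₀ : X} (hx₀ : ‖x₀‖ = 1)
    (huniq : ∀ ψ : X →L[𝕜] 𝕜, ‖ψ‖ = 1 → ψ x₀ = 1 → ψ = f)
    {φ : ℕ → X →L[𝕜] 𝕜} (hφ : ∀ n, ‖φ n‖ = 1)
    (hlim : Tendsto (fun n => φ n x₀) atTop (𝓝 1)) :
    ∃ U : Ultrafilter ℕ, (U : Filter ℕ) ≤ atTop ∧
      ∀ y, Tendsto (fun n => φ n y) U (𝓝 (f y)) := by
  have hU : ((hyperfilter ℕ : Ultrafilter ℕ) : Filter ℕ) ≤ atTop := Nat.hyperfilter_le_atTop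
  refine ⟨hyperfilter ℕ, hU, ?_⟩
  obtain ⟨ψ, hψ, hle⟩ := (WeakDual.isCompact_closedBall (𝕜 := 𝕜) (0 : StrongDual 𝕜 X) 1
    ).ultrafilter_le_nhds ((hyperfilter ℕ).map fun n => StrongDual.toWeakDual (φ n)) (by
      refine le_principal_iff.2 (Ultrafilter.mem_map.2 (Filter.univ_mem' fun n => ?_))
      simp [hφ n])
  have hpt : ∀ y, Tendsto (fun n => φ n y) (hyperfilter ℕ : Filter ℕ) (𝓝 (ψ y)) := fun y =>
    ((WeakDual.eval_continuous y).tendsto ψ).comp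
      (show Tendsto (fun n => StrongDual.toWeakDual (φ n)) (hyperfilter ℕ : Filter ℕ) (𝓝 ψ)
        from hle)
  have hψ1 : WeakDual.toStrongDual ψ x₀ = 1 :=
    tendsto_nhds_unique (hpt x₀) (hlim.mono_left hU)
  have hψle : ‖WeakDual.toStrongDual ψ‖ ≤ 1 := by simpa using hψ
  have hψge : 1 ≤ ‖WeakDual.toStrongDual ψ‖ := by
    have := (WeakDual.toStrongDual ψ).le_opNorm x₀
    rwa [hψ1, hx₀, norm_one, mul_one] at this
  intro y
  rw [← huniq _ (le_antisymm hψle hψge) hψ1]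
  exact hpt y

/-- A smooth Banach space of dimension at least two whose closed unit ball contains a strongly
exposed point does not have numerical index one: some operator has numerical radius strictly
smaller than its norm. -/
theorem smooth_space_with_strongly_exposed_point_not_numerical_index_one
    {𝕜 X : Type*} [RCLike 𝕜] [NormedAddCommGroup X] [NormedSpace 𝕜 X] [CompleteSpace X]
    (hdim : 2 ≤ Module.rank 𝕜 X)
    (hsmooth : ∀ z : X, z ≠ 0 → ∃! φ : X →L[𝕜] 𝕜, ‖φ‖ = 1 ∧ φ z = (‖z‖ : 𝕜))
    (hexp : ∃ x₀ ∈ Metric.closedBall (0 : X) 1, ∃ f : X →L[𝕜] 𝕜, ‖f‖ = 1 ∧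
      ∀ z : ℕ → X, (∀ n, z n ∈ Metric.closedBall (0 : X) 1) →
        Tendsto (fun n => RCLike.re (f (z n))) atTop (𝓝 1) →
        Tendsto z atTop (𝓝 x₀)) :
    ∃ T : X →L[𝕜] X,
      sSup {r : ℝ | ∃ (x : X) (φ : X →L[𝕜] 𝕜),
        ‖x‖ = 1 ∧ ‖φ‖ = 1 ∧ φ x = 1 ∧ r = ‖φ (T x)‖} < ‖T‖ := by
  obtain ⟨x₀, hx₀, f, hf, hexp⟩ := hexp
  rw [mem_closedBall_zero_iff] at hx₀
  obtain ⟨y, hy, hfy⟩ := exists_norm_eq_one_apply_eq_zero hdim f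
  refine ⟨f.smulRight y, ?_⟩
  rw [ContinuousLinearMap.norm_smulRight_apply, hf, hy, one_mul]
  by_contra! hsup
  have hstate : ∀ n : ℕ, ∃ (z : X) (ψ : X →L[𝕜] 𝕜), ‖z‖ = 1 ∧ ‖ψ‖ = 1 ∧ ψ z = 1 ∧
      ∃ t : ℝ, f z = (t : 𝕜) ∧ t ≤ 1 ∧ 1 - 1 / ((n : ℝ) + 1) ≤ t ∧
        1 - 1 / ((n : ℝ) + 1) ≤ ‖ψ y‖ := by
    intro n
    have hpos : (0 : ℝ) < 1 / ((n : ℝ) + 1) := by positivity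
    have hle1 : 1 / ((n : ℝ) + 1) ≤ 1 := by
      rw [div_le_one (by positivity)]
      linarith [n.cast_nonneg (α := ℝ)]
    obtain ⟨r, ⟨x, φ, hx, hφ, hφx, rfl⟩, hr⟩ := exists_lt_of_lt_csSup
      (Set.nonempty_iff_ne_empty.2 fun h => by
        rw [h, Real.sSup_empty] at hsup
        linarith) (lt_of_lt_of_le (sub_lt_self 1 hpos) hsup)
    rw [ContinuousLinearMap.smulRight_apply, map_smul, norm_smul] at hr
    have hfx1 : ‖f x‖ ≤ 1 := by simpa [hf, hx] using f.le_opNorm x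
    have hφy1 : ‖φ y‖ ≤ 1 := by simpa [hφ, hy] using φ.le_opNorm y
    have hfx : f x ≠ 0 := by
      rintro h
      rw [h, norm_zero, zero_mul] at hr
      linarith
    obtain ⟨z, ψ, hz, hψ, hψz, hfz, hψφ⟩ := exists_rotated_state f φ x hx hφ hφx hfx
    refine ⟨z, ψ, hz, hψ, hψz, ‖f x‖, hfz, hfx1, ?_, ?_⟩
    · exact hr.le.trans (mul_le_of_le_one_right (norm_nonneg _) hφy1)
    · rw [hψφ]
      exact hr.le.trans (mul_le_of_le_one_left (norm_nonneg _) hfx1)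
  choose z φ hz hφ hφz t hfz ht1 ht hφy using hstate
  have hlow : Tendsto (fun n : ℕ => 1 - 1 / ((n : ℝ) + 1)) atTop (𝓝 1) := by
    simpa using tendsto_one_div_add_atTop_nhds_zero_nat.const_sub (1 : ℝ)
  have htlim : Tendsto t atTop (𝓝 1) :=
    tendsto_of_tendsto_of_tendsto_of_le_of_le hlow tendsto_const_nhds ht ht1
  have hzlim : Tendsto z atTop (𝓝 x₀) := hexp z (fun n => by simp [hz n]) (by simpa [hfz])
  have hx₀1 : ‖x₀‖ = 1 := tendsto_nhds_unique hzlim.norm (by simp [hz])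
  have hfx₀ : f x₀ = 1 := by
    refine tendsto_nhds_unique ((f.continuous.tendsto x₀).comp hzlim) ?_
    have := (RCLike.continuous_ofReal (K := 𝕜)).tendsto 1 |>.comp htlim
    simpa [Function.comp_def, hfz] using this
  have hφlim : Tendsto (fun n => φ n x₀) atTop (𝓝 1) := by
    rw [tendsto_iff_norm_sub_tendsto_zero]
    refine squeeze_zero (fun _ => norm_nonneg _) (fun n => ?_)
      (tendsto_iff_norm_sub_tendsto_zero.1 hzlim)
    rw [← hφz n, ← map_sub, norm_sub_rev (z n)]
    simpa [hφ n] using (φ n).le_opNorm (x₀ - z n)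
  obtain ⟨U, hU, hlim⟩ := exists_ultrafilter_tendsto_of_smooth (f := f) hx₀1
    (fun ψ hψ hψx => (hsmooth x₀ (norm_ne_zero_iff.1 (by simp [hx₀1]))).unique
      ⟨hψ, by simp [hψx, hx₀1]⟩ ⟨hf, by simp [hfx₀, hx₀1]⟩) hφ hφlim
  have hcontra := le_of_tendsto_of_tendsto' (hlow.mono_left hU) (hlim y).norm hφy
  rw [hfy, norm_zero] at hcontra
  linarith
end
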